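/- Let d ≥ 2 and let H be a finite hypergraph of d-intervals. Then τ*(H) ≤ (4d − 6 + 3/d)·ν(H). -/

import Mathlib

/-- A `d`-interval: a union of at most `d` pairwise disjoint closed intervals
on the real line. -/
def IsDInterval (d : ℕ) (h : Set ℝ) : Prop :=
  ∃ (n : ℕ) (a b : Fin n → ℝ), n ≤ d ∧ (∀ i, a i ≤ b i) ∧
    (Set.univ : Set (Fin n)).PairwiseDisjoint (fun i => Set.Icc (a i) (b i)) ∧
    h = ⋃ i, Set.Icc (a i) (b i)

/-- The matching number: the maximum size of a set of pairwise disjoint edges. -/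
noncomputable def nu {α : Type*} (H : Set (Set α)) : ℕ :=
  sSup {n | ∃ M : Finset (Set α), ↑M ⊆ H ∧
    (M : Set (Set α)).PairwiseDisjoint id ∧ M.card = n}

/-- The fractional covering number: the infimum of `∑ₓ f x` over finitely
supported nonnegative `f : α → ℝ` with `∑_{x ∈ e} f x ≥ 1` for every edge `e`. -/
noncomputable def tauStar {α : Type*} (H : Set (Set α)) : ℝ :=
  sInf {t | ∃ f : α → ℝ, (Function.support f).Finite ∧ (∀ x, 0 ≤ f x) ∧
    (∀ e ∈ H, 1 ≤ ∑ᶠ x ∈ e, f x) ∧ t = ∑ᶠ x, f x}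

/-!
For `d ≥ 3` Alon's bound `2d · ν` is enough. Linear programming duality produces a fractional
matching `g` of total weight `τ*`. When two edges meet, a left endpoint of a component of one of
them lies in the other, so averaging with respect to `g` yields an edge whose neighbours, itself
included, have total weight at most `2d`; choosing such edges greedily gives a matching of at least
`τ* / 2d` edges.

For `d = 2` Tardos's bound `3ν` is enough, by a topological argument made discrete. Suppose that no
`n` points pierce `H`. Cutting the line at `n` points leaves `n + 1` pieces, and some edge avoids
the cuts and thus touches at most two of the pieces. Cuts correspond to points of a simplex, and
Scarf's lemma plays the role of the KKMS theorem: it finds nearly equal cuts for which the sets of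
touched pieces support a perfect fractional matching of the `n + 1` indices. Such a system of sets
of size at most two contains a matching of at least `(n + 1) / 3` sets, and since the cuts are
nearly equal, the corresponding edges of `H` are disjoint. Hence `n + 1 ≤ 3ν`.

Scarf's lemma follows from a parity count. Modulo two, the dominating sets form a cycle and the
feasible bases of a nondegenerate linear program form a cocycle, hence a coboundary, so an even
number of sets are both; the basis of slack variables is one of them.
-/

open Finset

section Dominating

variable {K I α : Type*} [LinearOrder α]

/-- A set `J` of columns is dominating with respect to the rows `R` of `c` if every column is
weakly above all of `J` in some row of `R`. The empty set counts as dominating, which makes it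
the starting vertex of Scarf's parity argument. -/
def IsDominating (c : I → K → α) (J : Finset K) (R : Finset I) : Prop :=
  J.Nonempty → ∀ k, ∃ i ∈ R, ∀ j ∈ J, c i j ≤ c i k

open scoped Classical in
/-- The columns witnessing that `J` is not dominating with respect to the rows `R`. -/
noncomputable def undominated [Fintype K] (c : I → K → α) (J : Finset K) (R : Finset I) :
    Finset K :=
  {k | ∀ i ∈ R, ∃ j ∈ J, c i k < c i j}

open scoped Classical in
/-- The columns of `S` that minimise row `i`. -/
noncomputable def rowArgmin (c : I → K → α) (S : Finset K) (i : I) : Finset K :=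
  {k ∈ S | ∀ k' ∈ S, c i k ≤ c i k'}

variable {c : I → K → α} {J : Finset K} {R : Finset I} {i : I} {k : K}

theorem isDominating_empty (c : I → K → α) (R : Finset I) : IsDominating c ∅ R :=
  fun h => absurd h not_nonempty_empty

theorem IsDominating.mono {J' : Finset K} {R' : Finset I} (h : IsDominating c J R)
    (hJ : J'.Nonempty → J' ⊆ J) (hR : R ⊆ R') : IsDominating c J' R' := fun hJ' k => by
  obtain ⟨i, hi, hik⟩ := h (hJ'.mono (hJ hJ')) k
  exact ⟨i, hR hi, fun j hj => hik j (hJ hJ' hj)⟩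

theorem mem_rowArgmin {S : Finset K} :
    k ∈ rowArgmin c S i ↔ k ∈ S ∧ ∀ k' ∈ S, c i k ≤ c i k' := by
  simp [rowArgmin]

theorem card_rowArgmin (hc : ∀ i, Function.Injective (c i)) {S : Finset K} (hS : S.Nonempty)
    (i : I) : #(rowArgmin c S i) = 1 := by
  obtain ⟨k, hk, hmin⟩ := exists_min_image S (c i) hS
  refine card_eq_one.2 ⟨k, ext fun k' => ?_⟩
  simp only [mem_rowArgmin, mem_singleton]
  constructor
  · rintro ⟨hk', hmin'⟩
    exact hc i ((hmin' k hk).antisymm (hmin k' hk'))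
  · rintro rfl
    exact ⟨hk, hmin⟩

variable [Fintype K]

theorem mem_undominated : k ∈ undominated c J R ↔ ∀ i ∈ R, ∃ j ∈ J, c i k < c i j := by
  simp [undominated]

theorem notMem_undominated : k ∉ undominated c J R ↔ ∃ i ∈ R, ∀ j ∈ J, c i j ≤ c i k := by
  simp [undominated]

theorem isDominating_iff_undominated_eq_empty (hJ : J.Nonempty) :
    IsDominating c J R ↔ undominated c J R = ∅ := by
  simp [IsDominating, hJ, eq_empty_iff_forall_notMem, notMem_undominated]

variable [DecidableEq I]

theorem IsDominating.le_of_mem_undominated_erase (h : IsDominating c J R)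
    (hk : k ∈ undominated c J (R.erase i)) {j : K} (hj : j ∈ J) : c i j ≤ c i k := by
  obtain ⟨i', hi', hle⟩ := h ⟨j, hj⟩ k
  obtain rfl | hne := eq_or_ne i' i
  · exact hle j hj
  · exact absurd hk (notMem_undominated.2 ⟨i', mem_erase.2 ⟨hne, hi'⟩, hle⟩)

theorem IsDominating.disjoint_undominated_erase (h : IsDominating c J R) (hJ : J.Nonempty)
    {i' : I} (hne : i ≠ i') :
    Disjoint (undominated c J (R.erase i)) (undominated c J (R.erase i')) := by
  refine disjoint_left.2 fun k hk hk' => ?_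
  obtain ⟨r, hr, hle⟩ := h hJ k
  obtain rfl | hri := eq_or_ne r i
  · exact notMem_undominated.2 ⟨r, mem_erase.2 ⟨hne, hr⟩, hle⟩ hk'
  · exact notMem_undominated.2 ⟨r, mem_erase.2 ⟨hri, hr⟩, hle⟩ hk

theorem card_filter_exists_ne_eq_of_card_eq_succ {ι κ : Type*} [DecidableEq ι] [DecidableEq κ]
    {s : Finset ι} {f : ι → κ} (h : #s = #(s.image f) + 1) :
    #{i ∈ s | ∃ i' ∈ s.erase i, f i' = f i} = 2 := by
  obtain ⟨p, hp, q, hq, hne, hpq⟩ := exists_ne_map_eq_of_card_lt_of_maps_to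
    (by omega : #(s.image f) < #s) fun i hi => mem_image_of_mem f hi
  have himage : (s.erase p).image f = s.image f := by
    refine (image_subset_image (erase_subset p s)).antisymm fun x hx => ?_
    obtain ⟨i, hi, rfl⟩ := mem_image.1 hx
    obtain rfl | hip := eq_or_ne i p
    · exact mem_image.2 ⟨q, mem_erase.2 ⟨hne.symm, hq⟩, hpq.symm⟩
    · exact mem_image_of_mem f (mem_erase.2 ⟨hip, hi⟩)
  have hinj : Set.InjOn f (s.erase p : Finset ι) :=
    card_image_iff.1 (by rw [himage, card_erase_of_mem hp]; omega)
  rw [← card_pair hne]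
  congr 1
  ext i
  simp only [mem_filter, mem_insert, mem_singleton, mem_erase]
  constructor
  · rintro ⟨hi, i', ⟨hi'i, hi'⟩, hf⟩
    by_contra! hcon
    obtain rfl | hi'p := eq_or_ne i' p
    · exact hcon.2 (hinj (mem_erase.2 ⟨hcon.1, hi⟩) (mem_erase.2 ⟨hne.symm, hq⟩)
        (hf.symm.trans hpq))
    · exact hi'i (hinj (mem_erase.2 ⟨hi'p, hi'⟩) (mem_erase.2 ⟨hcon.1, hi⟩) hf)
  · rintro (rfl | rfl)
    · exact ⟨hp, q, ⟨hne.symm, hq⟩, hpq.symm⟩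
    · exact ⟨hq, p, ⟨hne, hp⟩, hpq⟩

variable [DecidableEq K]

theorem IsDominating.card_filter_disjoint_undominated (hc : ∀ i, Function.Injective (c i))
    (h : IsDominating c J R) (hJ : J.Nonempty) (hcard : #R = #J + 1) :
    #{i ∈ R | Disjoint J (undominated c J (R.erase i))} = 2 := by
  choose a haJ hmax using fun i => exists_max_image J (c i) hJ
  have ha : ∀ {i j}, j ∈ J → (∀ j' ∈ J, c i j' ≤ c i j) → a i = j := fun {i j} hj hle =>
    hc i ((hle _ (haJ i)).antisymm (hmax i j hj))
  have himage : R.image a = J := by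
    refine (image_subset_iff.2 fun i _ => haJ i).antisymm fun j hj => ?_
    obtain ⟨i, hi, hle⟩ := h hJ j
    exact mem_image.2 ⟨i, hi, ha hj hle⟩
  have hmem : ∀ {j S}, j ∈ J → (j ∉ undominated c J S ↔ ∃ i ∈ S, a i = j) := fun {j S} hj => by
    rw [notMem_undominated]
    refine exists_congr fun i => and_congr_right fun _ => ⟨ha hj, ?_⟩
    rintro rfl
    exact hmax i
  rw [← card_filter_exists_ne_eq_of_card_eq_succ (f := a) (by rw [himage, hcard])]
  refine congrArg card (filter_congr fun i _ => ⟨fun hdisj => ?_, ?_⟩)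
  · exact (hmem (haJ i)).1 (disjoint_left.1 hdisj (haJ i))
  · rintro ⟨i', hi', hii'⟩
    refine disjoint_left.2 fun j hj => ?_
    obtain ⟨r, hr, rfl⟩ := mem_image.1 (himage.symm ▸ hj : j ∈ R.image a)
    refine (hmem hj).2 ?_
    obtain rfl | hri := eq_or_ne r i
    · exact ⟨i', hi', hii'⟩
    · exact ⟨r, mem_erase.2 ⟨hri, hr⟩, rfl⟩

theorem IsDominating.insert_of_mem_rowArgmin (h : IsDominating c J R) (hi : i ∈ R)
    (hk : k ∈ rowArgmin c (undominated c J (R.erase i)) i) :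
    IsDominating c (insert k J) R := by
  obtain ⟨hkQ, hmin⟩ := mem_rowArgmin.1 hk
  intro _ k'
  by_cases hk' : k' ∈ undominated c J (R.erase i)
  · exact ⟨i, hi, forall_mem_insert _ _ _ |>.2 ⟨hmin k' hk', fun j hj =>
      h.le_of_mem_undominated_erase hk' hj⟩⟩
  · obtain ⟨i', hi', hle⟩ := notMem_undominated.1 hk'
    obtain ⟨j, hj, hlt⟩ := mem_undominated.1 hkQ i' hi'
    exact ⟨i', mem_of_mem_erase hi', forall_mem_insert _ _ _ |>.2 ⟨hlt.le.trans (hle j hj), hle⟩⟩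

theorem IsDominating.exists_mem_rowArgmin (hc : ∀ i, Function.Injective (c i))
    (hkJ : k ∉ J) (h : IsDominating c (insert k J) R) (hcard : #R = #J + 1) :
    ∃ i ∈ R, Disjoint J (undominated c J (R.erase i)) ∧
      k ∈ rowArgmin c (undominated c J (R.erase i)) i := by
  have hne := insert_nonempty k J
  choose a haJ hmax using fun i => exists_max_image (insert k J) (c i) hne
  have ha : ∀ j ∈ insert k J, ∃ i ∈ R, a i = j := fun j hj => by
    obtain ⟨i, hi, hle⟩ := h hne j
    exact ⟨i, hi, hc i ((hle _ (haJ i)).antisymm (hmax i j hj))⟩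
  have hinj : Set.InjOn a R := injOn_of_surjOn_of_card_le a (fun i _ => haJ i)
    (fun j hj => ha j hj) (by rw [card_insert_of_notMem hkJ, hcard])
  obtain ⟨i, hi, hik⟩ := ha k (mem_insert_self k J)
  have hlt : ∀ i' ∈ R.erase i, a i' ∈ J ∧ c i' k < c i' (a i') := fun i' hi' => by
    have hne : a i' ≠ k := fun h' =>
      ne_of_mem_erase hi' (hinj (mem_of_mem_erase hi') hi (h'.trans hik.symm))
    exact ⟨mem_of_mem_insert_of_ne (haJ i') hne,
      (hmax i' k (mem_insert_self k J)).lt_of_ne fun h' => hne (hc i' h').symm⟩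
  refine ⟨i, hi, disjoint_left.2 fun j hj => notMem_undominated.2 ?_, mem_rowArgmin.2 ⟨?_, ?_⟩⟩
  · obtain ⟨i', hi', rfl⟩ := ha j (mem_insert_of_mem hj)
    refine ⟨i', mem_erase.2 ⟨?_, hi'⟩, fun j' hj' => hmax i' j' (mem_insert_of_mem hj')⟩
    rintro rfl
    exact hkJ (hik ▸ hj)
  · exact mem_undominated.2 fun i' hi' => ⟨a i', hlt i' hi'⟩
  · intro k' hk'
    exact h.le_of_mem_undominated_erase
      (mem_undominated.2 fun i' hi' => (mem_undominated.1 hk' i' hi').imp fun j hj =>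
        ⟨mem_insert_of_mem hj.1, hj.2⟩) (mem_insert_self k J)

open scoped Classical in
theorem IsDominating.filter_insert_eq_biUnion (hc : ∀ i, Function.Injective (c i))
    (h : IsDominating c J R) (hcard : #R = #J + 1) :
    ({k | k ∉ J ∧ IsDominating c (insert k J) R} : Finset K) =
      {i ∈ R | Disjoint J (undominated c J (R.erase i))}.biUnion
        fun i => rowArgmin c (undominated c J (R.erase i)) i := by
  ext k
  simp only [mem_filter, mem_univ, true_and, mem_biUnion, and_assoc]
  constructor
  · rintro ⟨hkJ, hk⟩
    exact hk.exists_mem_rowArgmin hc hkJ hcard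
  · rintro ⟨i, hi, hdisj, hk⟩
    exact ⟨fun hkJ => disjoint_left.1 hdisj hkJ (mem_rowArgmin.1 hk).1,
      h.insert_of_mem_rowArgmin hi hk⟩

open scoped Classical in
theorem card_isDominating_insert_add_card_isDominating_erase
    (hc : ∀ i, Function.Injective (c i)) (h : IsDominating c J R) (hJ : J.Nonempty)
    (hcard : #R = #J + 1) :
    #{k | k ∉ J ∧ IsDominating c (insert k J) R} + #{i ∈ R | IsDominating c J (R.erase i)} = 2 := by
  let Q i := undominated c J (R.erase i)
  have herase : ({i ∈ R | IsDominating c J (R.erase i)} : Finset I) =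
      {i ∈ {i ∈ R | Disjoint J (Q i)} | Q i = ∅} := by
    rw [filter_filter]
    refine filter_congr fun i _ => (isDominating_iff_undominated_eq_empty hJ).trans ?_
    exact ⟨fun h' => ⟨by simp [Q, h'], h'⟩, And.right⟩
  rw [h.filter_insert_eq_biUnion hc hcard, herase, card_biUnion, card_filter,
    ← sum_add_distrib, ← h.card_filter_disjoint_undominated hc hJ hcard, card_eq_sum_ones]
  · refine sum_congr rfl fun i _ => ?_
    obtain hQ | hQ := (Q i).eq_empty_or_nonempty
    · simp [Q, rowArgmin, hQ]
    · simp [Q, card_rowArgmin hc hQ, hQ.ne_empty]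
  · exact fun i _ i' _ hne => (h.disjoint_undominated_erase hJ hne).mono
      (fun _ hk => (mem_rowArgmin.1 hk).1) fun _ hk => (mem_rowArgmin.1 hk).1

open scoped Classical in
theorem even_card_isDominating_insert_add_card_isDominating_erase [Nonempty K]
    (hc : ∀ i, Function.Injective (c i)) (hcard : #R = #J + 1) :
    Even (#{k | k ∉ J ∧ IsDominating c (insert k J) R} +
      #{i ∈ R | IsDominating c J (R.erase i)}) := by
  obtain rfl | hJ := J.eq_empty_or_nonempty
  · obtain ⟨i, rfl⟩ := card_eq_one.1 hcard
    have hmin : ({k | k ∉ (∅ : Finset K) ∧ IsDominating c (insert k ∅) {i}} : Finset K) =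
        rowArgmin c univ i := by
      simp [rowArgmin, IsDominating]
    rw [hmin, card_rowArgmin hc univ_nonempty,
      filter_true_of_mem fun _ _ => isDominating_empty c _]
    exact even_two
  by_cases h : IsDominating c J R
  · rw [card_isDominating_insert_add_card_isDominating_erase hc h hJ hcard]
    exact even_two
  · rw [filter_false_of_mem fun k _ hk => h (hk.2.mono (fun _ => subset_insert k J) subset_rfl),
      filter_false_of_mem fun i _ hi => h (hi.mono (fun _ => subset_rfl) (erase_subset i R))]
    exact Even.zero

end Dominating

section Parity

variable {X : Type*} [DecidableEq X]

theorem exists_eq_sum_erase_of_sum_erase_eq_zero [Nonempty X] {m : ℕ} {f : Finset X → ZMod 2}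
    (hf : ∀ C : Finset X, #C = m + 1 → ∑ v ∈ C, f (C.erase v) = 0) :
    ∃ g : Finset X → ZMod 2, ∀ D : Finset X, #D = m → f D = ∑ v ∈ D, g (D.erase v) := by
  let v₀ : X := Classical.arbitrary X
  refine ⟨fun E => if v₀ ∈ E then 0 else f (insert v₀ E), fun D hD => ?_⟩
  by_cases hv₀ : v₀ ∈ D
  · rw [sum_eq_single_of_mem v₀ hv₀ fun v _ hv => by simp [hv₀, hv.symm]]
    simp [insert_erase hv₀]
  · have h := hf (insert v₀ D) (by rw [card_insert_of_notMem hv₀, hD])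
    rw [sum_insert hv₀, erase_insert hv₀, CharTwo.add_eq_zero] at h
    refine h.trans (sum_congr rfl fun v hv => ?_)
    beta_reduce
    rw [if_neg fun h => hv₀ (mem_of_mem_erase h),
      erase_insert_of_ne fun h : v₀ = v => hv₀ (h ▸ hv)]

variable [Fintype X]

theorem sum_powersetCard_sum_erase {M : Type*} [AddCommMonoid M] (m : ℕ)
    (F : Finset X → X → M) :
    ∑ D ∈ powersetCard (m + 1) univ, ∑ v ∈ D, F (D.erase v) v =
      ∑ E ∈ powersetCard m univ, ∑ v ∈ Eᶜ, F E v := by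
  rw [sum_sigma', sum_sigma']
  refine sum_bij' (fun p _ => ⟨p.1.erase p.2, p.2⟩) (fun p _ => ⟨insert p.2 p.1, p.2⟩)
    ?_ ?_ ?_ ?_ fun _ _ => rfl
  all_goals
    rintro ⟨D, v⟩ h
    simp only [mem_sigma, mem_powersetCard, subset_univ, true_and, mem_compl] at h
  · simp [card_erase_of_mem h.2, h.1]
  · simp [card_insert_of_notMem h.2, h.1]
  · simp [insert_erase h.2]
  · simp [erase_insert h.2]

theorem sum_mul_eq_zero_of_cycle_of_cocycle [Nonempty X] {m : ℕ} {o f : Finset X → ZMod 2}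
    (ho : ∀ E : Finset X, #E = m → ∑ v ∈ Eᶜ, o (insert v E) = 0)
    (hf : ∀ C : Finset X, #C = m + 2 → ∑ v ∈ C, f (C.erase v) = 0) :
    ∑ D ∈ powersetCard (m + 1) univ, o D * f D = 0 := by
  obtain ⟨g, hg⟩ := exists_eq_sum_erase_of_sum_erase_eq_zero hf
  calc ∑ D ∈ powersetCard (m + 1) univ, o D * f D
    _ = ∑ D ∈ powersetCard (m + 1) univ, ∑ v ∈ D, o (insert v (D.erase v)) * g (D.erase v) := by
      refine sum_congr rfl fun D hD => ?_
      rw [hg D (mem_powersetCard_univ.1 hD), mul_sum]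
      exact sum_congr rfl fun v hv => by rw [insert_erase hv]
    _ = ∑ E ∈ powersetCard m univ, ∑ v ∈ Eᶜ, o (insert v E) * g E :=
      sum_powersetCard_sum_erase m fun E v => o (insert v E) * g E
    _ = 0 := sum_eq_zero fun E hE => by
      rw [← sum_mul, ho E (mem_powersetCard_univ.1 hE), zero_mul]

theorem even_card_filter_and [Nonempty X] {m : ℕ} {P Q : Finset X → Prop}
    [DecidablePred P] [DecidablePred Q]
    (hP : ∀ E : Finset X, #E = m → Even #{v ∈ Eᶜ | P (insert v E)})
    (hQ : ∀ C : Finset X, #C = m + 2 → Even #{v ∈ C | Q (C.erase v)}) :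
    Even #{D ∈ powersetCard (m + 1) univ | P D ∧ Q D} := by
  simp_rw [← ZMod.natCast_eq_zero_iff_even, natCast_card_filter] at hP hQ ⊢
  simpa only [ite_zero_mul_ite_zero, one_mul] using
    sum_mul_eq_zero_of_cycle_of_cocycle (o := fun D => if P D then 1 else 0)
      (f := fun D => if Q D then 1 else 0) hP hQ

open scoped Classical in
theorem even_card_isDominating_insert {K I α : Type*} [LinearOrder α] [Fintype K] [Nonempty K]
    [Fintype I] [DecidableEq K] [DecidableEq I] {c : I → K → α}
    (hc : ∀ i, Function.Injective (c i)) {E : Finset (K ⊕ I)}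
    (hE : #E + 1 = Fintype.card I) :
    Even #{v ∈ Eᶜ | IsDominating c (insert v E).toLeft (insert v E).toRightᶜ} := by
  have h := even_card_isDominating_insert_add_card_isDominating_erase (J := E.toLeft)
    (R := E.toRightᶜ) hc (by
      have := card_toLeft_add_card_toRight (u := E)
      rw [card_compl]
      omega)
  convert h using 1
  rw [← card_toLeft_add_card_toRight]
  congr 2
  · ext k
    simp
  · ext i
    simp [compl_insert]

end Parity

section Feasible

variable {𝕜 X E : Type*} [Field 𝕜] [Fintype X] [AddCommGroup E] [Module 𝕜 E]

variable (𝕜) in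
/-- The right-hand side `b` is nondegenerate for the columns `v` if it is not a combination of
fewer than `finrank 𝕜 E` of them. -/
def IsNondegenerate (v : X → E) (b : E) : Prop :=
  ∀ D : Finset X, #D < Module.finrank 𝕜 E →
    ∀ w : X → 𝕜, (∀ x ∉ D, w x = 0) → Fintype.linearCombination 𝕜 v w ≠ b

variable (𝕜) in
/-- A set `D` of columns is feasible for the linear program with columns `v` and right-hand side
`b` if `b` is a nonnegative combination of the columns in `D`. -/
def IsFeasible [LE 𝕜] (v : X → E) (b : E) (D : Finset X) : Prop :=
  ∃ w : X → 𝕜, (∀ x, 0 ≤ w x) ∧ (∀ x ∉ D, w x = 0) ∧ Fintype.linearCombination 𝕜 v w = b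

variable {v : X → E} {b : E} {C D : Finset X}

theorem exists_ne_zero_linearCombination_eq_zero [Module.Finite 𝕜 E]
    (hC : Module.finrank 𝕜 E < #C) :
    ∃ y : X → 𝕜, y ≠ 0 ∧ (∀ x ∉ C, y x = 0) ∧ Fintype.linearCombination 𝕜 v y = 0 := by
  classical
  have hdep : ¬ LinearIndepOn 𝕜 v C := fun h => by
    have := LinearIndependent.fintype_card_le_finrank h
    simp only [SetLike.coe_sort_coe, Fintype.card_coe] at this
    omega
  obtain ⟨y, hy, x, hx, hyx⟩ := not_linearIndepOn_finset_iff.1 hdep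
  refine ⟨fun x => if x ∈ C then y x else 0, fun h => hyx ?_, fun x hx => if_neg hx, ?_⟩
  · simpa [hx] using congrFun h x
  · simpa [Fintype.linearCombination_apply, ite_smul] using hy

theorem IsNondegenerate.subsingleton_setOf_eq_zero (h : IsNondegenerate 𝕜 v b)
    (hC : #C = Module.finrank 𝕜 E + 1) {w : X → 𝕜} (hw : ∀ x ∉ C, w x = 0)
    (hwb : Fintype.linearCombination 𝕜 v w = b) : {x | x ∈ C ∧ w x = 0}.Subsingleton := by
  classical
  rintro x ⟨hx, hwx⟩ x' ⟨hx', hwx'⟩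
  by_contra hne
  have hx'C : x' ∈ C.erase x := mem_erase.2 ⟨Ne.symm hne, hx'⟩
  refine h ((C.erase x).erase x') ?_ w (fun z hz => ?_) hwb
  · rw [card_erase_of_mem hx'C, card_erase_of_mem hx]
    have := card_pos.2 ⟨x', hx'C⟩
    rw [card_erase_of_mem hx] at this
    omega
  · obtain rfl | hzx' := eq_or_ne z x'
    · exact hwx'
    obtain rfl | hzx := eq_or_ne z x
    · exact hwx
    · exact hw z fun hzC => hz (mem_erase.2 ⟨hzx', mem_erase.2 ⟨hzx, hzC⟩⟩)

theorem IsNondegenerate.eq_zero_of_linearCombination_eq_zero (h : IsNondegenerate 𝕜 v b)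
    (hC : #C = Module.finrank 𝕜 E + 1) {w y : X → 𝕜} (hw : ∀ x ∉ C, w x = 0)
    (hwb : Fintype.linearCombination 𝕜 v w = b) (hy : ∀ x ∉ C, y x = 0)
    (hy₀ : Fintype.linearCombination 𝕜 v y = 0) {l : X} (hl : l ∈ C) (hwl : w l = 0)
    (hyl : y l = 0) : y = 0 := by
  by_contra hne
  obtain ⟨x, hyx⟩ := Function.ne_iff.1 hne
  have hx : x ∈ C := by_contra fun hx => hyx (hy x hx)
  have hxl : x = l := h.subsingleton_setOf_eq_zero hC (w := w - (w x / y x) • y)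
    (fun z hz => by simp [hw z hz, hy z hz]) (by simp [hwb, hy₀])
    ⟨hx, by simp [div_mul_cancel₀ _ hyx]⟩ ⟨hl, by simp [hwl, hyl]⟩
  exact hyx (hxl ▸ hyl)

variable [LinearOrder 𝕜] [IsStrictOrderedRing 𝕜]

theorem exists_neg_of_linearCombination_eq_zero {φ : E →ₗ[𝕜] 𝕜} (hφ : ∀ x, 0 < φ (v x))
    {y : X → 𝕜} (hy : Fintype.linearCombination 𝕜 v y = 0) (hy₀ : y ≠ 0) : ∃ x, y x < 0 := by
  by_contra! hnonneg
  have hsum : ∑ x, y x * φ (v x) = 0 := by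
    simpa [Fintype.linearCombination_apply] using congrArg φ hy
  rw [sum_eq_zero_iff_of_nonneg fun x _ => mul_nonneg (hnonneg x) (hφ x).le] at hsum
  exact hy₀ (funext fun x => (mul_eq_zero.1 (hsum x (mem_univ x))).resolve_right (hφ x).ne')

theorem forall_add_mul_nonneg_iff_le_div {X : Type*} {w y : X → 𝕜} {l : X} {t : 𝕜}
    (hw : ∀ x, 0 ≤ w x) (hl : y l < 0) (hmin : ∀ x, y x < 0 → w l / -y l ≤ w x / -y x)
    (ht : 0 ≤ t) : (∀ x, 0 ≤ w x + t * y x) ↔ t ≤ w l / -y l := by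
  refine ⟨fun h => ?_, fun h x => ?_⟩
  · rw [le_div_iff₀ (neg_pos.2 hl)]
    linarith [h l]
  · obtain hx | hx := lt_or_ge (y x) 0
    · linarith [(le_div_iff₀ (neg_pos.2 hx)).1 (h.trans (hmin x hx))]
    · exact add_nonneg (hw x) (mul_nonneg ht hx)

/-- The ratio test: a half-line entering the nonnegative orthant through the facet `l₀` leaves it
through exactly one other facet. -/
theorem card_filter_exists_add_mul_eq_zero {X : Type*} {C : Finset X} {w y : X → 𝕜} {l₀ : X}
    [DecidablePred fun l => ∃ t, w l + t * y l = 0 ∧ ∀ x, 0 ≤ w x + t * y x]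
    (hl₀ : l₀ ∈ C) (hw : ∀ x, 0 ≤ w x) (hwl₀ : w l₀ = 0) (hyl₀ : 0 < y l₀)
    (hyC : ∀ x ∉ C, y x = 0) (hneg : ∃ x, y x < 0)
    (hsub : ∀ t, {x | x ∈ C ∧ w x + t * y x = 0}.Subsingleton) :
    #{l ∈ C | ∃ t, w l + t * y l = 0 ∧ ∀ x, 0 ≤ w x + t * y x} = 2 := by
  classical
  have hC : ∀ x, y x < 0 → x ∈ C := fun x hx => by_contra fun h => hx.ne (hyC x h)
  obtain ⟨l₁, hl₁, hmin⟩ := exists_min_image {x ∈ C | y x < 0} (fun x => w x / -y x)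
    (hneg.imp fun x hx => mem_filter.2 ⟨hC x hx, hx⟩)
  replace hl₁ := (mem_filter.1 hl₁).2
  replace hmin : ∀ x, y x < 0 → w l₁ / -y l₁ ≤ w x / -y x := fun x hx =>
    hmin x (mem_filter.2 ⟨hC x hx, hx⟩)
  have hne : l₀ ≠ l₁ := by
    rintro rfl
    exact hl₁.not_gt hyl₀
  have hratio : w l₁ + w l₁ / -y l₁ * y l₁ = 0 := by
    field_simp [hl₁.ne]
    ring
  rw [← card_pair hne]
  congr 1
  ext l
  simp only [mem_filter, mem_insert, mem_singleton]
  constructor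
  · rintro ⟨hl, t, hzero, hnonneg⟩
    refine or_iff_not_imp_left.2 fun hll₀ => ?_
    have ht : 0 ≤ t := nonneg_of_mul_nonneg_left (by simpa [hwl₀] using hnonneg l₀) hyl₀
    have hyl : y l < 0 := by
      by_contra! hyl
      have := mul_nonneg ht hyl
      have hwl : w l = 0 := by linarith [hw l]
      exact hll₀ (hsub 0 ⟨hl, by simp [hwl]⟩ ⟨hl₀, by simp [hwl₀]⟩)
    have htl : t = w l / -y l := by
      rw [eq_div_iff (neg_pos.2 hyl).ne']
      linarith
    have hle : t ≤ w l₁ / -y l₁ := (forall_add_mul_nonneg_iff_le_div hw hl₁ hmin ht).1 hnonneg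
    exact hsub t ⟨hl, hzero⟩ ⟨hC l₁ hl₁, hle.antisymm (htl ▸ hmin l hyl) ▸ hratio⟩
  · rintro (rfl | rfl)
    · exact ⟨hl₀, 0, by simp [hwl₀], by simpa using hw⟩
    · exact ⟨hC l hl₁, _, hratio, (forall_add_mul_nonneg_iff_le_div hw hl₁ hmin
        (div_nonneg (hw l) (neg_nonneg.2 hl₁.le))).2 le_rfl⟩

theorem isFeasible_erase_iff_exists_add_mul [DecidableEq X] (hb : IsNondegenerate 𝕜 v b)
    (hC : #C = Module.finrank 𝕜 E + 1) {w y : X → 𝕜} {l₀ : X} (hl₀ : l₀ ∈ C)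
    (hw : ∀ x ∉ C.erase l₀, w x = 0) (hwb : Fintype.linearCombination 𝕜 v w = b)
    (hy : ∀ x ∉ C, y x = 0) (hy₀ : Fintype.linearCombination 𝕜 v y = 0) (hyl₀ : y l₀ ≠ 0)
    {l : X} (hl : l ∈ C) :
    IsFeasible 𝕜 v b (C.erase l) ↔ ∃ t, w l + t * y l = 0 ∧ ∀ x, 0 ≤ w x + t * y x := by
  have hwC : ∀ x ∉ C, w x = 0 := fun x hx => hw x fun h => hx (mem_of_mem_erase h)
  constructor
  · rintro ⟨z, hz, hzC, hzb⟩
    have hline : z - w - (z l₀ / y l₀) • y = 0 :=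
      hb.eq_zero_of_linearCombination_eq_zero hC hwC hwb
        (fun x hx => by simp [hwC x hx, hy x hx, hzC x fun h => hx (mem_of_mem_erase h)])
        (by simp [hzb, hwb, hy₀]) hl₀ (hw l₀ (notMem_erase l₀ C))
        (by simp [hw l₀ (notMem_erase l₀ C), div_mul_cancel₀ _ hyl₀])
    have hzx : ∀ x, w x + z l₀ / y l₀ * y x = z x := fun x => by
      have := congrFun hline x
      simp only [Pi.sub_apply, Pi.smul_apply, smul_eq_mul, Pi.zero_apply] at this
      linarith
    exact ⟨z l₀ / y l₀, by rw [hzx, hzC l (notMem_erase l C)], fun x => by rw [hzx]; exact hz x⟩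
  · rintro ⟨t, hzero, hnonneg⟩
    refine ⟨w + t • y, hnonneg, fun x hx => ?_, by simp [hwb, hy₀]⟩
    obtain rfl | hxl := eq_or_ne x l
    · exact hzero
    · have hxC : x ∉ C := fun h => hx (mem_erase.2 ⟨hxl, h⟩)
      simp [hwC x hxC, hy x hxC]

theorem even_card_isFeasible_erase [DecidableEq X] [Module.Finite 𝕜 E] {φ : E →ₗ[𝕜] 𝕜}
    (hφ : ∀ x, 0 < φ (v x)) (hb : IsNondegenerate 𝕜 v b) (hC : #C = Module.finrank 𝕜 E + 1)
    [DecidablePred (IsFeasible 𝕜 v b)] : Even #{l ∈ C | IsFeasible 𝕜 v b (C.erase l)} := by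
  classical
  by_cases! hnone : ∀ l ∈ C, ¬ IsFeasible 𝕜 v b (C.erase l)
  · rw [filter_false_of_mem hnone]
    exact Even.zero
  obtain ⟨l₀, hl₀, w, hw, hwl₀, hwb⟩ := hnone
  have hwC : ∀ x ∉ C, w x = 0 := fun x hx => hwl₀ x fun h => hx (mem_of_mem_erase h)
  obtain ⟨y, hyne, hy, hy₀, hyl₀⟩ : ∃ y : X → 𝕜, y ≠ 0 ∧ (∀ x ∉ C, y x = 0) ∧
      Fintype.linearCombination 𝕜 v y = 0 ∧ 0 < y l₀ := by
    obtain ⟨y, hyne, hy, hy₀⟩ := exists_ne_zero_linearCombination_eq_zero (v := v)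
      (by omega : Module.finrank 𝕜 E < #C)
    have hyl₀ : y l₀ ≠ 0 := fun h => hyne (hb.eq_zero_of_linearCombination_eq_zero hC hwC hwb hy
      hy₀ hl₀ (hwl₀ l₀ (notMem_erase l₀ C)) h)
    obtain hneg | hpos := hyl₀.lt_or_gt
    · exact ⟨-y, neg_ne_zero.2 hyne, fun x hx => by simp [hy x hx], by simp [hy₀], by simpa⟩
    · exact ⟨y, hyne, hy, hy₀, hpos⟩
  rw [filter_congr fun l hl =>
      isFeasible_erase_iff_exists_add_mul hb hC hl₀ hwl₀ hwb hy hy₀ hyl₀.ne' hl,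
    card_filter_exists_add_mul_eq_zero hl₀ hw (hwl₀ l₀ (notMem_erase l₀ C)) hyl₀ hy
      (exists_neg_of_linearCombination_eq_zero hφ hy₀ hyne) fun t =>
      hb.subsingleton_setOf_eq_zero hC (w := w + t • y)
        (fun x hx => by simp [hwC x hx, hy x hx]) (by simp [hwb, hy₀])]
  exact even_two

end Feasible

section Scarf

section NormedSpace

variable {X E : Type*} [Fintype X] [NormedAddCommGroup E] [NormedSpace ℝ E]

theorem dense_compl_of_ne_top {p : Submodule ℝ E} (hp : p ≠ ⊤) : Dense (p : Set E)ᶜ := by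
  rw [← interior_eq_empty_iff_dense_compl, ← Set.not_nonempty_iff_eq_empty]
  exact fun h => hp (p.eq_top_of_nonempty_interior' h)

variable [FiniteDimensional ℝ E]

theorem dense_setOf_isNondegenerate (v : X → E) : Dense {b | IsNondegenerate ℝ v b} := by
  classical
  have : CompleteSpace E := FiniteDimensional.complete ℝ E
  let S : Set (Finset X) := {D | #D < Module.finrank ℝ E}
  have hdense : Dense (⋂ D ∈ S, (Submodule.span ℝ (D.image v : Set E) : Set E)ᶜ) := by
    refine dense_biInter_of_isOpen
      (fun D _ => (Submodule.closed_of_finiteDimensional _).isOpen_compl) S.to_countable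
      fun D hD => dense_compl_of_ne_top fun htop => ?_
    have hfinrank := finrank_span_finset_le_card (R := ℝ) (D.image v)
    rw [Set.finrank, htop, finrank_top] at hfinrank
    exact (hfinrank.trans card_image_le).not_gt hD
  refine hdense.mono fun b hb D hD w hw hwb => ?_
  refine Set.mem_iInter₂.1 hb D hD ?_
  rw [← hwb, Fintype.linearCombination_apply]
  refine Submodule.sum_mem _ fun x _ => ?_
  by_cases hx : x ∈ D
  · exact Submodule.smul_mem _ _ (Submodule.subset_span (mem_coe.2 (mem_image_of_mem v hx)))
  · simp [hw x hx]

theorem isClosed_setOf_isFeasible {v : X → E} {φ : E →ₗ[ℝ] ℝ} (hφ : ∀ x, 0 < φ (v x))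
    (D : Finset X) : IsClosed {b | IsFeasible ℝ v b D} := by
  refine closure_subset_iff_isClosed.1 fun b hb => ?_
  let box : Set (X → ℝ) := Set.Icc 0 (fun x => (φ b + 1) / φ (v x)) ∩ {w | ∀ x ∉ D, w x = 0}
  have hbox : IsCompact (Fintype.linearCombination ℝ v '' box) := by
    refine (isCompact_Icc.inter_right ?_).image (LinearMap.continuous_of_finiteDimensional _)
    simp only [Set.ofPred_forall]
    exact isClosed_biInter fun x _ => isClosed_eq (continuous_apply x) continuous_const
  have hU : IsOpen {b' | φ b' < φ b + 1} :=
    isOpen_lt (LinearMap.continuous_of_finiteDimensional φ) continuous_const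
  have hsub : {b' | φ b' < φ b + 1} ∩ {b | IsFeasible ℝ v b D} ⊆
      Fintype.linearCombination ℝ v '' box := by
    rintro b' ⟨hlt, w, hw, hwD, rfl⟩
    refine ⟨w, ⟨⟨hw, fun x => ?_⟩, hwD⟩, rfl⟩
    rw [le_div_iff₀ (hφ x)]
    refine le_trans ?_ (le_of_lt hlt)
    rw [Fintype.linearCombination_apply, map_sum]
    simp only [map_smul, smul_eq_mul]
    exact single_le_sum (f := fun x => w x * φ (v x))
      (fun x _ => mul_nonneg (hw x) (hφ x).le) (mem_univ x)
  obtain ⟨w, ⟨hw, hwD⟩, hwb⟩ := closure_minimal hsub hbox.isClosed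
    (hU.inter_closure ⟨lt_add_one (φ b), hb⟩)
  exact ⟨w, hw.1, hwD, hwb⟩

end NormedSpace

variable {K I α : Type*}

/-- The columns of `a` together with the unit columns of the slack variables. -/
def withSlacks [DecidableEq I] (a : K → I → ℝ) : K ⊕ I → I → ℝ :=
  Sum.elim a fun i => Pi.single i 1

variable [LinearOrder α] [Fintype K] [Nonempty K] [Fintype I] [Nonempty I]
  {c : I → K → α} {a : K → I → ℝ} {b : I → ℝ}

theorem exists_isDominating_isFeasible_of_isNondegenerate [DecidableEq I]
    (hc : ∀ i, Function.Injective (c i))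
    (ha : ∀ x, 0 < ∑ i, withSlacks a x i) (hb : ∀ i, 0 < b i)
    (hnd : IsNondegenerate ℝ (withSlacks a) b) :
    ∃ D : Finset (K ⊕ I), D.toLeft.Nonempty ∧ IsDominating c D.toLeft D.toRightᶜ ∧
      IsFeasible ℝ (withSlacks a) b D := by
  classical
  obtain ⟨m, hm⟩ := Nat.exists_eq_succ_of_ne_zero (Fintype.card_ne_zero (α := I))
  let φ : (I → ℝ) →ₗ[ℝ] ℝ := ∑ i, LinearMap.proj i
  have heven := even_card_filter_and (m := m)
    (P := fun D : Finset (K ⊕ I) => IsDominating c D.toLeft D.toRightᶜ)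
    (Q := IsFeasible ℝ (withSlacks a) b)
    (fun E hE => even_card_isDominating_insert hc (by omega))
    (fun C hC => even_card_isFeasible_erase (φ := φ) (by simpa [φ] using ha) hnd (by simp [hC, hm]))
  let slacks : Finset (K ⊕ I) := univ.map .inr
  have hslacks : slacks ∈ ({D ∈ powersetCard (m + 1) univ |
      IsDominating c D.toLeft D.toRightᶜ ∧ IsFeasible ℝ (withSlacks a) b D} : Finset _) := by
    have hleft : slacks.toLeft = ∅ := by ext; simp [slacks]
    refine mem_filter.2 ⟨mem_powersetCard_univ.2 (by simp [slacks, hm]), ?_,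
      Sum.elim 0 b, ?_, ?_, ?_⟩
    · rw [hleft]
      exact isDominating_empty c _
    · simpa using fun i => (hb i).le
    · simp [slacks]
    · ext i
      simp [Fintype.linearCombination_apply, withSlacks, Pi.single_apply]
  obtain ⟨D, hD, hne⟩ := exists_mem_ne
    (Nat.le_of_dvd (card_pos.2 ⟨_, hslacks⟩) heven.two_dvd) slacks
  obtain ⟨hcard, hdom, hfeas⟩ := mem_filter.1 hD
  refine ⟨D, nonempty_iff_ne_empty.2 fun hleft => hne ?_, hdom, hfeas⟩
  refine eq_of_subset_of_card_le (subset_map_inr.2 ⟨hleft, subset_univ _⟩) ?_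
  simp [mem_powersetCard_univ.1 hcard, slacks, hm]

theorem exists_isDominating_isFeasible [DecidableEq I] (hc : ∀ i, Function.Injective (c i))
    (ha : ∀ x, 0 < ∑ i, withSlacks a x i) (hb : ∀ i, 0 < b i) :
    ∃ D : Finset (K ⊕ I), D.toLeft.Nonempty ∧ IsDominating c D.toLeft D.toRightᶜ ∧
      IsFeasible ℝ (withSlacks a) b D := by
  let φ : (I → ℝ) →ₗ[ℝ] ℝ := ∑ i, LinearMap.proj i
  let S : Set (Finset (K ⊕ I)) :=
    {D | D.toLeft.Nonempty ∧ IsDominating c D.toLeft D.toRightᶜ}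
  have hclosed : IsClosed (⋃ D ∈ S, {b | IsFeasible ℝ (withSlacks a) b D}) :=
    S.toFinite.isClosed_biUnion fun D _ =>
      isClosed_setOf_isFeasible (φ := φ) (by simpa [φ] using ha) D
  have hopen : IsOpen {b : I → ℝ | ∀ i, 0 < b i} := by
    simp only [Set.ofPred_forall]
    exact isOpen_iInter_of_finite fun i => isOpen_lt continuous_const (continuous_apply i)
  have hsub : {b : I → ℝ | ∀ i, 0 < b i} ∩ {b | IsNondegenerate ℝ (withSlacks a) b} ⊆
      ⋃ D ∈ S, {b | IsFeasible ℝ (withSlacks a) b D} := by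
    rintro b ⟨hb, hnd⟩
    simpa [S, and_assoc] using exists_isDominating_isFeasible_of_isNondegenerate hc ha hb hnd
  simpa [S, and_assoc] using closure_minimal hsub hclosed
    ((dense_setOf_isNondegenerate _).open_subset_closure_inter hopen hb)

/-- Scarf's lemma. -/
theorem exists_isDominating_sum_mul_le (hc : ∀ i, Function.Injective (c i))
    (ha : ∀ k, 0 < ∑ i, a k i) (hb : ∀ i, 0 < b i) :
    ∃ (J : Finset K) (R : Finset I) (w : K → ℝ), J.Nonempty ∧ IsDominating c J R ∧
      (∀ k, 0 ≤ w k) ∧ (∀ k ∉ J, w k = 0) ∧ (∀ i, ∑ k, w k * a k i ≤ b i) ∧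
      ∀ i ∈ R, ∑ k, w k * a k i = b i := by
  classical
  obtain ⟨D, hD, hdom, w, hw, hwD, hwb⟩ := exists_isDominating_isFeasible (a := a) hc
    (by simpa [withSlacks] using ha) hb
  have hsum : ∀ i, ∑ k, w (.inl k) * a k i + w (.inr i) = b i := fun i => by
    rw [← hwb]
    simp [Fintype.linearCombination_apply, withSlacks, Pi.single_apply]
  refine ⟨D.toLeft, D.toRightᶜ, fun k => w (.inl k), hD, hdom, fun k => hw _,
    fun k hk => hwD _ (by simpa using hk), fun i => ?_, fun i hi => ?_⟩
  · linarith [hsum i, hw (.inr i)]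
  · linarith [hsum i, hwD (.inr i) (by simpa using hi)]

end Scarf

section DiscreteKKMS

/-- A perfect fractional matching of the hypergraph on `V` with edges `σ k` for `k ∈ J`:
nonnegative edge weights of total weight exactly `1` at every vertex. -/
structure IsPerfectFractionalMatching {K V : Type*} [DecidableEq V] (J : Finset K)
    (σ : K → Finset V) (w : K → ℝ) : Prop where
  nonneg : ∀ k ∈ J, 0 ≤ w k
  sum_eq_one : ∀ i, ∑ k ∈ J with i ∈ σ k, w k = 1

variable {ι : Type*} [Fintype ι] [DecidableEq ι] {N : ℕ}

variable (ι N) in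
/-- The lattice points of the simplex spanned by the vectors `N • eᵢ`. -/
abbrev LatticeSimplex : Type _ :=
  piAntidiag (univ : Finset ι) N

theorem LatticeSimplex.sum_eq (x : LatticeSimplex ι N) : ∑ i, x.1 i = N :=
  (mem_piAntidiag.1 x.2).1

theorem exists_latticeSimplex_le {u : ι → ℕ} (hu : N ≤ ∑ i, u i) :
    ∃ x : LatticeSimplex ι N, x.1 ≤ u := by
  suffices h : ∃ x ≤ u, ∑ i, x i = N from
    let ⟨x, hxu, hx⟩ := h
    ⟨⟨x, mem_piAntidiag.2 ⟨hx, fun _ _ => mem_univ _⟩⟩, hxu⟩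
  induction N with
  | zero => exact ⟨0, fun _ => Nat.zero_le _, by simp⟩
  | succ N ih =>
    obtain ⟨x, hxu, hx⟩ := ih (by omega)
    obtain ⟨i, -, hi⟩ := exists_lt_of_sum_lt (by omega : ∑ i, x i < ∑ i, u i)
    refine ⟨x + Pi.single i 1, fun j => ?_, by simp [sum_add_distrib, hx]⟩
    obtain rfl | hj := eq_or_ne j i
    · simpa using hi
    · simpa [hj] using hxu j

theorem exists_injective_forall_le_imp_le {K : Type*} [Finite K] (a : K → ℕ) :
    ∃ c : K → ℕ ×ₗ ℕ, Function.Injective c ∧ ∀ x y, c x ≤ c y → a x ≤ a y := by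
  obtain ⟨e, he⟩ := Countable.exists_injective_nat K
  refine ⟨fun x => toLex (a x, e x), fun x y h => he (congrArg (fun p => (ofLex p).2) h),
    fun x y h => ?_⟩
  obtain h | h := Prod.Lex.le_iff.1 h
  · exact h.le
  · exact h.1.le

variable {J : Finset (LatticeSimplex ι N)}

theorem sum_sup_lt_of_forall_exists_le (hJ : ∀ i, ∃ x ∈ J, x.1 i ≠ 0)
    (hdom : ∀ y : LatticeSimplex ι N, ∃ i, ∀ x ∈ J, x.1 i ≤ y.1 i) :
    ∑ i, J.sup (fun x => x.1 i) < N + Fintype.card ι := by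
  by_contra! hle
  have hpos : ∀ i, 1 ≤ J.sup fun x => x.1 i := fun i => by
    obtain ⟨x, hx, hxi⟩ := hJ i
    exact (Nat.one_le_iff_ne_zero.2 hxi).trans (le_sup (f := fun x => x.1 i) hx)
  have hsum : N ≤ ∑ i, ((J.sup fun x => x.1 i) - 1) := by
    rw [sum_tsub_distrib _ fun i _ => hpos i]
    simpa using Nat.le_sub_of_add_le hle
  obtain ⟨y, hy⟩ := exists_latticeSimplex_le hsum
  obtain ⟨i, hi⟩ := hdom y
  have : (J.sup fun x => x.1 i) ≤ y.1 i := Finset.sup_le hi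
  have : y.1 i ≤ (J.sup fun x => x.1 i) - 1 := hy i
  have := hpos i
  omega

theorem exists_isPerfectFractionalMatching_sum_sup_lt [Nonempty ι]
    (σ : LatticeSimplex ι N → Finset ι) (hσ : ∀ x, (σ x).Nonempty)
    (hσ₀ : ∀ x, ∀ i ∈ σ x, x.1 i ≠ 0) :
    ∃ (J : Finset (LatticeSimplex ι N)) (w : LatticeSimplex ι N → ℝ),
      IsPerfectFractionalMatching J σ w ∧
        ∑ i, J.sup (fun x => x.1 i) < N + Fintype.card ι := by
  choose c hc hcle using fun i => exists_injective_forall_le_imp_le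
    fun x : LatticeSimplex ι N => x.1 i
  let corner (i : ι) : LatticeSimplex ι N :=
    ⟨Pi.single i N, mem_piAntidiag.2 ⟨by simp, fun _ _ => mem_univ _⟩⟩
  have : Nonempty (LatticeSimplex ι N) := Nonempty.map corner ‹_›
  obtain ⟨J, R, w, hJ, hdom, hw, hwJ, -, hwR⟩ := exists_isDominating_sum_mul_le
    (a := fun x i => if i ∈ σ x then 1 else 0) (b := 1) hc (by simpa using hσ) (by simp)
  replace hdom : ∀ y : LatticeSimplex ι N, ∃ i ∈ R, ∀ x ∈ J, x.1 i ≤ y.1 i := fun y => by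
    obtain ⟨i, hi, hle⟩ := hdom hJ y
    exact ⟨i, hi, fun x hx => hcle i x y (hle x hx)⟩
  replace hwR : ∀ i ∈ R, ∑ x ∈ J with i ∈ σ x, w x = 1 := fun i hi => by
    rw [sum_filter]
    refine (sum_subset (subset_univ J) fun x _ hx => by simp [hwJ x hx]).trans ?_
    simpa using hwR i hi
  have hne : ∀ i ∈ R, ∃ x ∈ J, x.1 i ≠ 0 := fun i hi => by
    obtain ⟨x, hx⟩ := nonempty_of_sum_ne_zero ((hwR i hi).trans_ne one_ne_zero)
    exact ⟨x, (mem_filter.1 hx).1, hσ₀ x i (mem_filter.1 hx).2⟩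
  have hR : ∀ i, i ∈ R := fun i => by
    obtain ⟨i', hi', hle⟩ := hdom (corner i)
    obtain ⟨x, hx, hxi'⟩ := hne i' hi'
    obtain rfl | hii' := eq_or_ne i' i
    · exact hi'
    · exact absurd (hle x hx) (by simpa [corner, hii'] using hxi')
  exact ⟨J, w, ⟨fun x _ => hw x, fun i => hwR i (hR i)⟩,
    sum_sup_lt_of_forall_exists_le (fun i => hne i (hR i)) fun y => (hdom y).imp fun _ => And.right⟩

end DiscreteKKMS

section Pieces

theorem sum_add_sum_univ_le {ι : Type*} [Fintype ι] {x y u : ι → ℕ} (hxu : x ≤ u)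
    (hyu : y ≤ u) (s : Finset ι) : ∑ i ∈ s, x i + ∑ i, y i ≤ ∑ i ∈ s, y i + ∑ i, u i := by
  classical
  rw [← sum_add_sum_compl s y, ← sum_add_sum_compl s u]
  have hs : ∑ i ∈ s, x i ≤ ∑ i ∈ s, u i := sum_le_sum fun i _ => hxu i
  have hsc : ∑ i ∈ sᶜ, y i ≤ ∑ i ∈ sᶜ, u i := sum_le_sum fun i _ => hyu i
  omega

/-- A union of at most `d` order-connected sets, which is all that is left of a `d`-interval when it
is restricted to finitely many points. -/
def IsUnionOrdConnected {α : Type*} [Preorder α] (d : ℕ) (E : Set α) : Prop :=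
  ∃ (m : ℕ) (C : Fin m → Set α), m ≤ d ∧ (∀ r, (C r).OrdConnected) ∧ E = ⋃ r, C r

theorem IsUnionOrdConnected.preimage {α β : Type*} [Preorder α] [Preorder β] {d : ℕ} {E : Set β}
    (hE : IsUnionOrdConnected d E) {p : α → β} (hp : Monotone p) :
    IsUnionOrdConnected d (p ⁻¹' E) := by
  obtain ⟨m, C, hm, hC, rfl⟩ := hE
  exact ⟨m, fun r => p ⁻¹' C r, hm, fun r => (hC r).preimage_mono hp, Set.preimage_iUnion⟩

variable {n s d N : ℕ} {x y u : Fin (n + 1) → ℕ} {i j : Fin (n + 1)} {E F : Set ℕ}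

/-- The `i`-th of the consecutive intervals of lengths `x 0, x 1, …` that tile the integer interval
`[0, ∑ i, x i)`. -/
def piece (x : Fin (n + 1) → ℕ) (i : Fin (n + 1)) : Finset ℕ :=
  Ico (∑ j ∈ Iio i, x j) (∑ j ∈ Iic i, x j)

theorem mem_piece {t : ℕ} : t ∈ piece x i ↔ ∑ j ∈ Iio i, x j ≤ t ∧ t < ∑ j ∈ Iic i, x j :=
  mem_Ico

theorem card_piece : #(piece x i) = x i := by
  rw [piece, Nat.card_Ico, ← Iio_insert, sum_insert (by simp), Nat.add_sub_cancel_right]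

theorem sum_Iic_le_sum_Iio (x : Fin (n + 1) → ℕ) (hij : i < j) :
    ∑ l ∈ Iic i, x l ≤ ∑ l ∈ Iio j, x l :=
  sum_le_sum_of_subset fun _ hl => mem_Iio.2 ((mem_Iic.1 hl).trans_lt hij)

theorem exists_mem_piece {t : ℕ} (ht : t < ∑ i, x i) : ∃ i, t ∈ piece x i := by
  have hlast : Iic (Fin.last n) = univ := eq_univ_of_forall fun i => mem_Iic.2 i.le_last
  obtain ⟨i, hi, hmin⟩ := WellFounded.has_min (wellFounded_lt (α := Fin (n + 1)))
    {i | t < ∑ j ∈ Iic i, x j} ⟨Fin.last n, by simpa [hlast] using ht⟩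
  refine ⟨i, mem_piece.2 ⟨not_lt.1 fun hlt => ?_, hi⟩⟩
  have hne : (Iio i).Nonempty := nonempty_of_sum_ne_zero (t.zero_le.trans_lt hlt).ne'
  refine hmin _ (hlt.trans_le (sum_le_sum_of_subset fun l hl => ?_)) (mem_Iio.1 (max'_mem _ hne))
  exact mem_Iic.2 (le_max' _ _ hl)

/-- The point `a` of the ground set is represented by the block `[a * s, (a + 1) * s)`, so a tiling
by `piece x` has its interior boundaries inside the blocks of these points. -/
def cutPoints (s : ℕ) (x : Fin (n + 1) → ℕ) : Finset ℕ :=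
  (univ.erase 0).image fun i => (∑ j ∈ Iio i, x j) / s

theorem card_cutPoints_le : #(cutPoints s x) ≤ n :=
  card_image_le.trans (by simp)

theorem sum_Iio_div_mem_cutPoints (hij : i < j) : (∑ l ∈ Iio j, x l) / s ∈ cutPoints s x :=
  mem_image_of_mem _ (mem_erase.2 ⟨((Fin.zero_le i).trans_lt hij).ne', mem_univ j⟩)

open scoped Classical in
/-- The indices of the pieces of the tiling given by `x` that meet the block of a point of `E`. -/
noncomputable def touched (s : ℕ) (E : Set ℕ) (x : Fin (n + 1) → ℕ) : Finset (Fin (n + 1)) :=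
  {i | ∃ t ∈ piece x i, t / s ∈ E}

theorem mem_touched : i ∈ touched s E x ↔ ∃ t ∈ piece x i, t / s ∈ E := by
  simp [touched]

theorem ne_zero_of_mem_touched (hi : i ∈ touched s E x) : x i ≠ 0 := by
  obtain ⟨t, ht, -⟩ := mem_touched.1 hi
  exact card_piece (x := x) ▸ (card_pos.2 ⟨t, ht⟩).ne'

theorem card_touched_le (hE : IsUnionOrdConnected d E)
    (hcut : Disjoint (cutPoints s x : Set ℕ) E) : #(touched s E x) ≤ d := by
  obtain ⟨m, C, hm, hC, rfl⟩ := hE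
  refine le_trans ?_ (hm.trans_eq' (card_fin m).symm)
  refine card_le_card_of_forall_subsingleton (fun i r => ∃ t ∈ piece x i, t / s ∈ C r)
    (fun i hi => ?_) fun r _ i hi j hj => ?_
  · obtain ⟨t, ht, hts⟩ := mem_touched.1 hi
    obtain ⟨r, hr⟩ := Set.mem_iUnion.1 hts
    exact ⟨r, mem_univ r, t, ht, hr⟩
  · by_contra hij
    wlog hlt : i < j generalizing i j
    · exact this _ hj _ hi (Ne.symm hij) (lt_of_le_of_ne (not_lt.1 hlt) (Ne.symm hij))
    obtain ⟨-, t, ht, htC⟩ := hi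
    obtain ⟨-, t', ht', htC'⟩ := hj
    have hle := (mem_piece.1 ht).2.le.trans (sum_Iic_le_sum_Iio x hlt)
    exact Set.disjoint_left.1 hcut (mem_coe.2 (sum_Iio_div_mem_cutPoints hlt))
      (Set.mem_iUnion.2 ⟨r, (hC r).out htC htC'
        ⟨Nat.div_le_div_right hle, Nat.div_le_div_right (mem_piece.1 ht').1⟩⟩)

theorem exists_mem_touched_of_mem {a : ℕ} (hcut : Disjoint (cutPoints s x : Set ℕ) E) (ha : a ∈ E)
    (hs : 0 < s) (hax : a * s + s ≤ ∑ i, x i) :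
    ∃ i ∈ touched s E x, ∑ j ∈ Iio i, x j ≤ a * s ∧ a * s + s ≤ ∑ j ∈ Iic i, x j := by
  obtain ⟨i, hi⟩ := exists_mem_piece (by omega : a * s < ∑ i, x i)
  obtain ⟨j, hj⟩ := exists_mem_piece (by omega : a * s + s - 1 < ∑ i, x i)
  have hmem : i ∈ touched s E x := mem_touched.2 ⟨a * s, hi, by rwa [Nat.mul_div_cancel _ hs]⟩
  rw [mem_piece] at hi hj
  obtain hij | rfl | hji := lt_trichotomy i j
  · have hle := sum_Iic_le_sum_Iio x hij
    have hdiv : (∑ l ∈ Iio j, x l) / s = a := by rw [Nat.div_eq_iff hs]; omega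
    refine absurd ha (Set.disjoint_left.1 hcut (mem_coe.2 ?_))
    exact hdiv ▸ sum_Iio_div_mem_cutPoints hij
  · exact ⟨i, hmem, hi.1, by omega⟩
  · have hle := sum_Iic_le_sum_Iio x hji
    omega

/-- The tilings `x` and `y` have boundaries less than one block apart, so a block inside the `i`-th
piece of `x` cannot be inside a later piece of `y`. -/
theorem not_lt_of_sum_lt {t : ℕ} (hxu : x ≤ u) (hyu : y ≤ u) (hu : ∑ i, u i < ∑ i, y i + s)
    (hx : t + s ≤ ∑ l ∈ Iic i, x l) (hy : ∑ l ∈ Iio j, y l ≤ t) : ¬ i < j := fun hij => by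
  have hdiff := sum_add_sum_univ_le hxu hyu (Iic i)
  have hle := sum_Iic_le_sum_Iio y hij
  omega

theorem disjoint_inter_of_disjoint_touched {q : ℕ} (hxu : x ≤ u) (hyu : y ≤ u)
    (hx : ∑ i, x i = q * s) (hy : ∑ i, y i = q * s) (hu : ∑ i, u i < q * s + s)
    (hxE : Disjoint (cutPoints s x : Set ℕ) E) (hyF : Disjoint (cutPoints s y : Set ℕ) F)
    (hEF : Disjoint (touched s E x) (touched s F y)) :
    Disjoint (E ∩ Set.Iio q) (F ∩ Set.Iio q) := by
  refine Set.disjoint_left.2 fun a ⟨haE, haq⟩ ⟨haF, _⟩ => ?_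
  have hs : 0 < s := Nat.pos_of_ne_zero fun hs => by simp [hs] at hu
  have has : a * s + s ≤ q * s := Nat.succ_mul a s ▸ Nat.mul_le_mul_right s haq
  obtain ⟨i, hi, hix, hxi⟩ := exists_mem_touched_of_mem hxE haE hs (hx ▸ has)
  obtain ⟨j, hj, hjy, hyj⟩ := exists_mem_touched_of_mem hyF haF hs (hy ▸ has)
  obtain hij | rfl | hji := lt_trichotomy i j
  · exact not_lt_of_sum_lt hxu hyu (hy ▸ hu) hxi hjy hij
  · exact disjoint_left.1 hEF hi hj
  · exact not_lt_of_sum_lt hyu hxu (hx ▸ hu) hyj hix hji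

theorem exists_monotone_subset_image_Iio {α : Type*} [LinearOrder α] {P : Finset α}
    (hP : P.Nonempty) : ∃ p : ℕ → α, Monotone p ∧ (P : Set α) ⊆ p '' Set.Iio #P := by
  have hlt (a : ℕ) : min a (#P - 1) < #P := by have := hP.card_pos; omega
  refine ⟨fun a => P.orderEmbOfFin rfl ⟨min a (#P - 1), hlt a⟩, fun a b hab => ?_, fun v hv => ?_⟩
  · exact (P.orderEmbOfFin rfl).monotone (min_le_min_right (#P - 1) hab)
  · obtain ⟨a, rfl⟩ := (P.range_orderEmbOfFin rfl).ge hv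
    exact ⟨a, a.2, congrArg _ (Fin.ext (min_eq_left (Nat.le_sub_one_of_lt a.2)))⟩

theorem exists_isPerfectFractionalMatching_of_not_pierced {α : Type*} [LinearOrder α]
    {H : Set (Set α)} {P : Finset α} (hH : ∀ e ∈ H, IsUnionOrdConnected d e)
    (hHP : ∀ e ∈ H, (e ∩ P).Nonempty)
    (hn : ∀ C : Finset α, #C ≤ n → ∃ e ∈ H, Disjoint (C : Set α) e) :
    ∃ (K : Type) (J : Finset K) (e : K → Set α) (σ : K → Finset (Fin (n + 1))) (w : K → ℝ),
      IsPerfectFractionalMatching J σ w ∧ (∀ k, e k ∈ H ∧ #(σ k) ≤ d) ∧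
        ∀ k ∈ J, ∀ l ∈ J, Disjoint (σ k) (σ l) → Disjoint (e k ∩ P) (e l ∩ P) := by
  classical
  have hP : P.Nonempty := by
    obtain ⟨e, he, -⟩ := hn ∅ (by simp)
    exact (hHP e he).mono Set.inter_subset_right
  obtain ⟨p, hp, hPp⟩ := exists_monotone_subset_image_Iio hP
  have hcut (x : LatticeSimplex (Fin (n + 1)) (#P * (n + 1))) :
      ∃ e ∈ H, Disjoint (cutPoints (n + 1) x.1 : Set ℕ) (p ⁻¹' e) := by
    obtain ⟨e, he, hdisj⟩ := hn ((cutPoints (n + 1) x.1).image p)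
      (card_image_le.trans card_cutPoints_le)
    exact ⟨e, he, Set.disjoint_image_left.1 (by simpa using hdisj)⟩
  choose e he hcut using hcut
  have hσ (x) : (touched (n + 1) (p ⁻¹' e x) x.1).Nonempty := by
    obtain ⟨v, hve, hvP⟩ := hHP _ (he x)
    obtain ⟨a, ha, rfl⟩ := hPp hvP
    obtain ⟨i, hi, -⟩ := exists_mem_touched_of_mem (hcut x) hve n.succ_pos
      ((Nat.succ_mul a (n + 1)).symm.trans_le ((Nat.mul_le_mul_right _ ha).trans_eq x.sum_eq.symm))
    exact ⟨i, hi⟩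
  obtain ⟨J, w, hw, hu⟩ := exists_isPerfectFractionalMatching_sum_sup_lt
    (fun x => touched (n + 1) (p ⁻¹' e x) x.1) hσ fun x i => ne_zero_of_mem_touched
  rw [Fintype.card_fin] at hu
  have hJ {x} (hx : x ∈ J) : x.1 ≤ fun i => J.sup fun x => x.1 i := fun i =>
    le_sup (f := fun x => x.1 i) hx
  refine ⟨_, J, e, _, w, hw, fun x => ⟨he x, card_touched_le
    ((hH _ (he x)).preimage hp) (hcut x)⟩, fun x hx y hy hxy => ?_⟩
  have := disjoint_inter_of_disjoint_touched (hJ hx) (hJ hy) x.sum_eq y.sum_eq hu (hcut x) (hcut y)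
    hxy
  refine Set.disjoint_left.2 fun v ⟨hvx, hvP⟩ ⟨hvy, _⟩ => ?_
  obtain ⟨a, ha, rfl⟩ := hPp hvP
  exact Set.disjoint_left.1 this ⟨hvx, ha⟩ ⟨hvy, ha⟩

end Pieces

section GraphMatching

variable {K V : Type*} {J S T M : Finset K} {σ : K → Finset V} {w : K → ℝ}

theorem forall_eq_or_forall_eq_of_forall_eq_or_eq {β γ : Type*} {f : K → β} {g : K → γ}
    (h : ∀ k ∈ S, ∀ l ∈ S, f k = f l ∨ g k = g l) :
    (∀ k ∈ S, ∀ l ∈ S, f k = f l) ∨ ∀ k ∈ S, ∀ l ∈ S, g k = g l := by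
  by_contra! ⟨⟨k, hk, l, hl, hkl⟩, m, hm, m', hm', hmm'⟩
  grind

namespace IsPerfectFractionalMatching

variable [DecidableEq V]

theorem sum_le_one (hw : IsPerfectFractionalMatching J σ w) (hSJ : S ⊆ J) {v : V}
    (hv : ∀ k ∈ S, v ∈ σ k) : ∑ k ∈ S, w k ≤ 1 :=
  (sum_le_sum_of_subset_of_nonneg (fun k hk => mem_filter.2 ⟨hSJ hk, hv k hk⟩)
    fun k hk _ => hw.nonneg k (mem_filter.1 hk).1).trans_eq (hw.sum_eq_one v)

theorem card_le_sum (hw : IsPerfectFractionalMatching J σ w) {U : Finset V}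
    (hU : ∀ k ∈ J, #(U ∩ σ k) ≤ 1) : #U ≤ ∑ k ∈ J with (U ∩ σ k).Nonempty, w k := by
  calc (#U : ℝ) = ∑ i ∈ U, ∑ k ∈ J with i ∈ σ k, w k := by simp [hw.sum_eq_one]
    _ = ∑ k ∈ J, ∑ _i ∈ U ∩ σ k, w k := by
      simp_rw [← filter_mem_eq_inter, sum_filter]
      exact sum_comm
    _ ≤ ∑ k ∈ J with (U ∩ σ k).Nonempty, w k := by
      rw [sum_filter]
      refine sum_le_sum fun k hk => ?_
      rw [sum_const, nsmul_eq_mul]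
      split_ifs with hne
      · exact mul_le_of_le_one_left (hw.nonneg k hk) (by exact_mod_cast hU k hk)
      · simp [not_nonempty_iff_eq_empty.1 hne]

theorem sum_le_one_of_eq_pair (hw : IsPerfectFractionalMatching J σ w) (hSJ : S ⊆ J)
    {u a : K → V} (hσ : ∀ k ∈ S, σ k = {u k, a k})
    (hint : ∀ k ∈ S, ∀ l ∈ S, u k = u l ∨ a k = a l) : ∑ k ∈ S, w k ≤ 1 := by
  obtain rfl | ⟨k, hk⟩ := S.eq_empty_or_nonempty
  · simp
  obtain hu | ha := forall_eq_or_forall_eq_of_forall_eq_or_eq hint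
  · exact hw.sum_le_one hSJ (v := u k) fun l hl => by simp [hσ l hl, hu k hk l hl]
  · exact hw.sum_le_one hSJ (v := a k) fun l hl => by simp [hσ l hl, ha k hk l hl]

end IsPerfectFractionalMatching

/-- `M` is a matching of largest size in the hypergraph with edges `σ k` for `k ∈ J`. -/
structure IsMaximumMatching (J : Finset K) (σ : K → Finset V) (M : Finset K) : Prop where
  subset : M ⊆ J
  pairwiseDisjoint : (M : Set K).PairwiseDisjoint σ
  card_le : ∀ M' ⊆ J, (M' : Set K).PairwiseDisjoint σ → #M' ≤ #M

theorem exists_isMaximumMatching (J : Finset K) (σ : K → Finset V) :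
    ∃ M, IsMaximumMatching J σ M := by
  classical
  obtain ⟨M, hM, hmax⟩ := exists_max_image
    (J.powerset.filter fun M : Finset K => (M : Set K).PairwiseDisjoint σ) card ⟨∅, by simp⟩
  simp only [mem_filter, mem_powerset] at hM hmax
  exact ⟨M, hM.1, hM.2, fun M' hM'J hM' => hmax M' ⟨hM'J, hM'⟩⟩

namespace IsMaximumMatching

theorem card_le_card_of_disjoint_sdiff [DecidableEq K] (hM : IsMaximumMatching J σ M)
    (hSM : S ⊆ M) (hTJ : T ⊆ J) (hT : (T : Set K).PairwiseDisjoint σ)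
    (hne : ∀ k ∈ T, (σ k).Nonempty)
    (hTM : ∀ k ∈ T, ∀ m ∈ M \ S, Disjoint (σ k) (σ m)) : #T ≤ #S := by
  have hdisj : Disjoint T (M \ S) := disjoint_left.2 fun k hkT hkM =>
    (hne k hkT).ne_empty (disjoint_self_iff_empty _ |>.1 (hTM k hkT k hkM))
  have hcard := hM.card_le (T ∪ M \ S) (union_subset hTJ (sdiff_subset.trans hM.subset)) <| by
    rw [coe_union, Set.pairwiseDisjoint_union]
    exact ⟨hT, hM.pairwiseDisjoint.subset (coe_subset.2 sdiff_subset),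
      fun k hk m hm _ => hTM k hk m hm⟩
  rw [card_union_of_disjoint hdisj, card_sdiff_of_subset hSM] at hcard
  have := card_le_card hSM
  omega

variable [DecidableEq V]

theorem exists_mem_eq_pair (hM : IsMaximumMatching J σ M) {k : K} (hk : k ∈ J) (hσk : #(σ k) ≤ 2)
    {u : V} (hu : u ∈ σ k) (huM : u ∉ M.biUnion σ) : ∃ m ∈ M, ∃ a ∈ σ m, σ k = {u, a} := by
  classical
  obtain ⟨m, hm, hkm⟩ : ∃ m ∈ M, ¬ Disjoint (σ k) (σ m) := by
    by_contra! h
    have := hM.card_le_card_of_disjoint_sdiff (T := {k}) (empty_subset M)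
      (singleton_subset_iff.2 hk) (by simp) (by simpa using ⟨u, hu⟩) (by simpa using h)
    simp at this
  obtain ⟨a, hak, ham⟩ := not_disjoint_iff.1 hkm
  have hua : u ≠ a := by
    rintro rfl
    exact huM (mem_biUnion.2 ⟨m, hm, ham⟩)
  refine ⟨m, hm, a, ham, (eq_of_subset_of_card_le ?_ ?_).symm⟩
  · exact insert_subset hu (singleton_subset_iff.2 hak)
  · rwa [card_pair hua]

/-- Otherwise `σ m` could be replaced by the two disjoint edges `σ k` and `σ l`. -/
theorem eq_or_eq_of_eq_pair (hM : IsMaximumMatching J σ M) {k l m : K} {u v a b : V} (hm : m ∈ M)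
    (hk : k ∈ J) (hσk : σ k = {u, a}) (hu : u ∉ M.biUnion σ) (ha : a ∈ σ m)
    (hl : l ∈ J) (hσl : σ l = {v, b}) (hv : v ∉ M.biUnion σ) (hb : b ∈ σ m) : u = v ∨ a = b := by
  classical
  by_contra! ⟨huv, hab⟩
  have huncovered {x c : V} (hx : x ∉ M.biUnion σ) (hc : c ∈ σ m) : x ≠ c := fun hxc =>
    hx (mem_biUnion.2 ⟨m, hm, hxc ▸ hc⟩)
  have hkl : Disjoint (σ k) (σ l) := by
    rw [hσk, hσl]
    simp [huv.symm, hab.symm, huncovered hv ha, (huncovered hu hb).symm]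
  have hpair {x c : V} (hx : x ∉ M.biUnion σ) (hc : c ∈ σ m) :
      ∀ m' ∈ M \ {m}, Disjoint {x, c} (σ m') := fun m' hm' => by
    obtain ⟨hm'M, hm'm⟩ : m' ∈ M ∧ m' ≠ m := by simpa using hm'
    refine disjoint_insert_left.2 ⟨fun h => hx (mem_biUnion.2 ⟨m', hm'M, h⟩), ?_⟩
    exact disjoint_singleton_left.2
      (disjoint_left.1 (hM.pairwiseDisjoint hm hm'M (Ne.symm hm'm)) hc)
  have hne : k ≠ l := by
    rintro rfl
    simp [hσk] at hkl
  refine absurd (hM.card_le_card_of_disjoint_sdiff (T := {k, l}) (singleton_subset_iff.2 hm)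
    (by simp [insert_subset_iff, hk, hl]) (by simp [Set.pairwiseDisjoint_insert, hkl])
    (by simp [hσk, hσl]) ?_) (by simp [card_pair hne])
  · simp only [mem_insert, mem_singleton, forall_eq_or_imp, forall_eq, hσk, hσl]
    exact ⟨hpair hu ha, hpair hv hb⟩

theorem card_compl_biUnion_le [Fintype V] (hM : IsMaximumMatching J σ M)
    (hw : IsPerfectFractionalMatching J σ w) (hσ : ∀ k ∈ J, #(σ k) ≤ 2) :
    #(M.biUnion σ)ᶜ ≤ #M := by
  classical
  obtain _ | _ := isEmpty_or_nonempty V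
  · simp [eq_empty_of_isEmpty]
  set U := (M.biUnion σ)ᶜ with hU
  have hex : ∀ k ∈ J, (U ∩ σ k).Nonempty → ∃ (m : K) (u a : V),
      m ∈ M ∧ u ∉ M.biUnion σ ∧ a ∈ σ m ∧ σ k = {u, a} := fun k hk ⟨u, hu⟩ => by
    rw [mem_inter, mem_compl] at hu
    obtain ⟨m, hm, a, ha, h⟩ := hM.exists_mem_eq_pair hk (hσ k hk) hu.2 hu.1
    exact ⟨m, u, a, hm, hu.1, ha, h⟩
  choose! m u a hm hu ha hσk using hex
  have hinter : ∀ k ∈ J, #(U ∩ σ k) ≤ 1 := fun k hk => by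
    obtain hempty | hne := (U ∩ σ k).eq_empty_or_nonempty
    · simp [hempty]
    · have haU : a k ∉ U := by simpa [hU] using ⟨m k, hm k hk hne, ha k hk hne⟩
      rw [hσk k hk hne, pair_comm, inter_insert_of_notMem haU]
      exact (card_le_card inter_subset_right).trans_eq (card_singleton _)
  have hfiber : ∀ m' ∈ M, ∑ k ∈ J with (U ∩ σ k).Nonempty ∧ m k = m', w k ≤ 1 := fun m' hm' => by
    refine hw.sum_le_one_of_eq_pair (u := u) (a := a) (filter_subset _ _)
      (fun k hk => ?_) fun k hk l hl => ?_
    · obtain ⟨hkJ, hne, -⟩ := mem_filter.1 hk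
      exact hσk k hkJ hne
    · obtain ⟨hkJ, hkU, hkm⟩ := mem_filter.1 hk
      obtain ⟨hlJ, hlU, hlm⟩ := mem_filter.1 hl
      exact hM.eq_or_eq_of_eq_pair hm' hkJ (hσk k hkJ hkU) (hu k hkJ hkU) (hkm ▸ ha k hkJ hkU)
        hlJ (hσk l hlJ hlU) (hu l hlJ hlU) (hlm ▸ ha l hlJ hlU)
  have hmaps : ∀ k ∈ J.filter (fun k => (U ∩ σ k).Nonempty), m k ∈ M := fun k hk =>
    hm k (mem_filter.1 hk).1 (mem_filter.1 hk).2
  suffices (#U : ℝ) ≤ #M by exact_mod_cast this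
  calc (#U : ℝ) ≤ ∑ k ∈ J with (U ∩ σ k).Nonempty, w k := hw.card_le_sum hinter
    _ = ∑ m' ∈ M, ∑ k ∈ J with (U ∩ σ k).Nonempty ∧ m k = m', w k := by
      simp_rw [← sum_fiberwise_of_maps_to hmaps, filter_filter]
    _ ≤ ∑ m' ∈ M, 1 := sum_le_sum hfiber
    _ = #M := by simp

end IsMaximumMatching

theorem IsPerfectFractionalMatching.exists_pairwiseDisjoint_card_le [DecidableEq V] [Fintype V]
    (hw : IsPerfectFractionalMatching J σ w) (hσ : ∀ k ∈ J, #(σ k) ≤ 2) :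
    ∃ M ⊆ J, (M : Set K).PairwiseDisjoint σ ∧ Fintype.card V ≤ 3 * #M := by
  classical
  obtain ⟨M, hM⟩ := exists_isMaximumMatching J σ
  refine ⟨M, hM.subset, hM.pairwiseDisjoint, ?_⟩
  have hcovered : #(M.biUnion σ) ≤ #M * 2 :=
    card_biUnion_le_card_mul M σ 2 fun k hk => hσ k (hM.subset hk)
  have huncovered := hM.card_compl_biUnion_le hw hσ
  rw [card_compl] at huncovered
  omega

end GraphMatching

section Duality

open Matrix

theorem exists_mem_stdSimplex_vecMul_le_mulVec {E P : Type*} [Fintype E] [Fintype P] [Nonempty E]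
    [Nonempty P] (A : Matrix E P ℝ) :
    ∃ g ∈ stdSimplex ℝ E, ∃ f ∈ stdSimplex ℝ P, ∀ e p, (g ᵥ* A) p ≤ (A *ᵥ f) e := by
  classical
  let B : (E → ℝ) →ₗ[ℝ] (P → ℝ) →ₗ[ℝ] ℝ := toLinearMap₂' ℝ A
  obtain ⟨g, hg, f, hf, hgf⟩ := Sion.exists_isSaddlePointOn (f := fun g f => B g f)
    ⟨_, single_mem_stdSimplex ℝ (Classical.arbitrary E)⟩ (convex_stdSimplex ℝ E)
    (isCompact_stdSimplex ℝ E)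
    (fun f _ =>
      (B.flip f).continuous_of_finiteDimensional.lowerSemicontinuous.lowerSemicontinuousOn _)
    (fun f _ => ((B.flip f).convexOn (convex_stdSimplex ℝ E)).quasiconvexOn)
    (convex_stdSimplex ℝ P) ⟨_, single_mem_stdSimplex ℝ (Classical.arbitrary P)⟩
    (isCompact_stdSimplex ℝ P)
    (fun g _ =>
      (B g).continuous_of_finiteDimensional.upperSemicontinuous.upperSemicontinuousOn _)
    (fun g _ => ((B g).concaveOn (convex_stdSimplex ℝ P)).quasiconcaveOn)
  refine ⟨g, hg, f, hf, fun e p => ?_⟩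
  have h := hgf _ (single_mem_stdSimplex ℝ e) _ (single_mem_stdSimplex ℝ p)
  change g ⬝ᵥ A.col p ≤ A.row e ⬝ᵥ f
  simpa [B, toLinearMap₂'_apply', dotProduct_mulVec] using h

/-- Rescaling optimal strategies of the matrix game `A` by its value gives solutions of equal size
to the covering and packing programs. -/
theorem exists_one_le_mulVec_vecMul_le_one {E P : Type*} [Fintype E] [Fintype P] (A : Matrix E P ℝ)
    (hA : ∀ e p, 0 ≤ A e p) (hpos : ∀ e, ∃ p, 0 < A e p) :
    ∃ (f : P → ℝ) (g : E → ℝ), 0 ≤ f ∧ 0 ≤ g ∧ 1 ≤ A *ᵥ f ∧ g ᵥ* A ≤ 1 ∧ ∑ p, f p = ∑ e, g e := by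
  obtain _ | ⟨⟨e₀⟩⟩ := isEmpty_or_nonempty E
  · exact ⟨0, 0, le_rfl, le_rfl, isEmptyElim, by simp, by simp⟩
  have : Nonempty E := ⟨e₀⟩
  have : Nonempty P := ⟨(hpos e₀).choose⟩
  obtain ⟨g, hg, f, hf, hgf⟩ := exists_mem_stdSimplex_vecMul_le_mulVec A
  obtain ⟨p₀, hp₀⟩ := Finite.exists_max (g ᵥ* A)
  set v := (g ᵥ* A) p₀
  have hv : 0 < v := by
    obtain ⟨e, -, he⟩ := exists_lt_of_sum_lt (by simp [hg.2] : ∑ _ : E, 0 < ∑ e, g e)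
    obtain ⟨p, hp⟩ := hpos e
    refine lt_of_lt_of_le ?_ (hp₀ p)
    exact sum_pos' (fun e _ => mul_nonneg (hg.1 e) (hA e p)) ⟨e, mem_univ e, mul_pos he hp⟩
  refine ⟨v⁻¹ • f, v⁻¹ • g, fun p => ?_, fun e => ?_, fun e => ?_, fun p => ?_, ?_⟩
  · exact mul_nonneg (inv_nonneg.2 hv.le) (hf.1 p)
  · exact mul_nonneg (inv_nonneg.2 hv.le) (hg.1 e)
  · simpa [mulVec_smul, inv_mul_eq_div, one_le_div hv] using hgf e p₀
  · simpa [smul_vecMul, inv_mul_eq_div, div_le_one hv] using hp₀ p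
  · simp [← mul_sum, hf.2, hg.2]

end Duality

section GreedyAveraging

theorem exists_pairwiseDisjoint_sum_le {β : Type*} [PartialOrder β] [OrderBot β]
    [DecidableRel (Disjoint : β → β → Prop)] {S : Finset β} {g : β → ℝ} {c : ℝ} (hbot : ⊥ ∉ S)
    (h : ∀ T ⊆ S, T.Nonempty → ∃ e ∈ T, ∑ f ∈ T with ¬ Disjoint e f, g f ≤ c) :
    ∃ M ⊆ S, (M : Set β).PairwiseDisjoint id ∧ ∑ e ∈ S, g e ≤ c * #M := by
  classical
  induction S using Finset.strongInduction with
  | H S ih =>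
    obtain rfl | hS := S.eq_empty_or_nonempty
    · exact ⟨∅, by simp⟩
    obtain ⟨e, he, hec⟩ := h S Subset.rfl hS
    have hee : ¬ Disjoint e e := fun hd => hbot (disjoint_self.1 hd ▸ he)
    have hsub : S.filter (Disjoint e) ⊆ S := filter_subset _ _
    obtain ⟨M, hMS, hM, hMc⟩ := ih _ (filter_ssubset.2 ⟨e, he, hee⟩) (fun hb => hbot (hsub hb))
      fun T hT => h T (hT.trans hsub)
    have heM : ∀ f ∈ M, Disjoint e f := fun f hf => (mem_filter.1 (hMS hf)).2
    refine ⟨insert e M, insert_subset he (hMS.trans hsub), ?_, ?_⟩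
    · rw [coe_insert]
      exact hM.insert fun f hf _ => heM f hf
    · rw [card_insert_of_notMem fun hmem => hee (heM e hmem),
        ← sum_filter_add_sum_filter_not S (Disjoint e)]
      push_cast
      linarith

variable {α : Type*} [∀ (x : α) (e : Set α), Decidable (x ∈ e)]
  {S : Finset (Set α)} {L : Set α → Finset α} {g : Set α → ℝ} {d : ℕ}

theorem sum_mul_card_filter_mem_le_card {T : Finset α}
    (hload : ∀ x ∈ T, ∑ e ∈ S with x ∈ e, g e ≤ 1) : ∑ e ∈ S, g e * #{x ∈ T | x ∈ e} ≤ #T := by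
  calc ∑ e ∈ S, g e * #{x ∈ T | x ∈ e} = ∑ x ∈ T, ∑ e ∈ S with x ∈ e, g e := by
        simp_rw [card_filter, Nat.cast_sum, mul_sum, sum_filter]
        rw [sum_comm]
        simp
    _ ≤ ∑ x ∈ T, 1 := sum_le_sum hload
    _ = #T := by simp

theorem sum_mul_sum_not_disjoint_le [DecidableRel (Disjoint : Set α → Set α → Prop)]
    (hg : ∀ e ∈ S, 0 ≤ g e) (hL : ∀ e ∈ S, #(L e) ≤ d)
    (hmeet : ∀ e ∈ S, ∀ f ∈ S, ¬ Disjoint e f → (∃ x ∈ L e, x ∈ f) ∨ ∃ x ∈ L f, x ∈ e)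
    (hload : ∀ e ∈ S, ∀ x ∈ L e, ∑ f ∈ S with x ∈ f, g f ≤ 1) :
    ∑ e ∈ S, g e * ∑ f ∈ S with ¬ Disjoint e f, g f ≤ ∑ e ∈ S, g e * (2 * d) := by
  have hcount : ∀ e ∈ S, ∀ f ∈ S, ¬ Disjoint e f →
      (1 : ℝ) ≤ #{x ∈ L e | x ∈ f} + #{x ∈ L f | x ∈ e} := fun e he f hf hef => by
    have : 0 < #{x ∈ L e | x ∈ f} ∨ 0 < #{x ∈ L f | x ∈ e} := by
      simpa only [card_pos, filter_nonempty_iff] using hmeet e he f hf hef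
    exact_mod_cast (by omega : 1 ≤ #{x ∈ L e | x ∈ f} + #{x ∈ L f | x ∈ e})
  calc ∑ e ∈ S, g e * ∑ f ∈ S with ¬ Disjoint e f, g f
      ≤ ∑ e ∈ S, ∑ f ∈ S, g e * g f * (#{x ∈ L e | x ∈ f} + #{x ∈ L f | x ∈ e}) := by
        refine sum_le_sum fun e he => ?_
        rw [mul_sum, sum_filter]
        refine sum_le_sum fun f hf => ?_
        have hgg := mul_nonneg (hg e he) (hg f hf)
        split_ifs with hef
        · exact mul_nonneg hgg (by positivity)
        · exact le_mul_of_one_le_right hgg (hcount e he f hf hef)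
    _ = 2 * ∑ e ∈ S, g e * ∑ f ∈ S, g f * #{x ∈ L e | x ∈ f} := by
        simp_rw [mul_add, sum_add_distrib, mul_sum, two_mul, sum_add_distrib]
        congr 1
        · simp_rw [mul_assoc]
        · rw [sum_comm]
          exact sum_congr rfl fun e _ => sum_congr rfl fun f _ => by ring
    _ ≤ 2 * ∑ e ∈ S, g e * d := by
        gcongr with e he
        · exact hg e he
        · exact (sum_mul_card_filter_mem_le_card (hload e he)).trans (by exact_mod_cast hL e he)
    _ = ∑ e ∈ S, g e * (2 * d) := by
        rw [mul_sum]
        exact sum_congr rfl fun e _ => by ring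

theorem exists_pairwiseDisjoint_sum_le_two_mul (hg : ∀ e ∈ S, 0 < g e)
    (hne : ∀ e ∈ S, e.Nonempty) (hL : ∀ e ∈ S, #(L e) ≤ d)
    (hmeet : ∀ e ∈ S, ∀ f ∈ S, ¬ Disjoint e f → (∃ x ∈ L e, x ∈ f) ∨ ∃ x ∈ L f, x ∈ e)
    (hload : ∀ e ∈ S, ∀ x ∈ L e, ∑ f ∈ S with x ∈ f, g f ≤ 1) :
    ∃ M ⊆ S, (M : Set (Set α)).PairwiseDisjoint id ∧ ∑ e ∈ S, g e ≤ 2 * d * #M := by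
  classical
  refine exists_pairwiseDisjoint_sum_le (fun hbot => (hne _ hbot).ne_empty rfl) fun T hT hTne => ?_
  have hloadT : ∀ e ∈ T, ∀ x ∈ L e, ∑ f ∈ T with x ∈ f, g f ≤ 1 := fun e he x hx =>
    (sum_le_sum_of_subset_of_nonneg (filter_subset_filter _ hT)
      fun f hf _ => (hg f (mem_filter.1 hf).1).le).trans (hload e (hT he) x hx)
  obtain ⟨e, he, hle⟩ := exists_le_of_sum_le hTne <|
    sum_mul_sum_not_disjoint_le (fun e he => (hg e (hT he)).le) (fun e he => hL e (hT he))
      (fun e he f hf => hmeet e (hT he) f (hT hf)) hloadT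
  exact ⟨e, he, le_of_mul_le_mul_left hle (hg e (hT he))⟩

end GreedyAveraging

section CoverMatching

variable {α : Type*} {H : Set (Set α)} {P : Finset α}

theorem card_le_nu (hfin : H.Finite) {M : Finset (Set α)} (hMH : ↑M ⊆ H)
    (hM : (M : Set (Set α)).PairwiseDisjoint id) : #M ≤ nu H := by
  refine le_csSup ⟨#hfin.toFinset, ?_⟩ ⟨M, hMH, hM, rfl⟩
  rintro _ ⟨M', hM'H, -, rfl⟩
  exact card_le_card fun e he => hfin.mem_toFinset.2 (hM'H he)

open scoped Classical in
theorem tauStar_le_sum {f : α → ℝ} (hf : ∀ x, 0 ≤ f x)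
    (hcover : ∀ e ∈ H, 1 ≤ ∑ x ∈ P with x ∈ e, f x) : tauStar H ≤ ∑ x ∈ P, f x := by
  have hfP (s : Set α) :
      ∑ᶠ x ∈ s, Set.indicator (P : Set α) f x = ∑ x ∈ P with x ∈ s, f x := by
    rw [finsum_mem_def, finsum_eq_sum_of_support_subset (s := P), sum_filter]
    · exact sum_congr rfl fun x hx => by simp [Set.indicator_apply, hx]
    · rw [Set.indicator_indicator]
      exact Set.support_indicator_subset.trans Set.inter_subset_right
  refine csInf_le ⟨0, ?_⟩ ⟨Set.indicator P f, ?_, ?_, fun e he => ?_, ?_⟩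
  · rintro _ ⟨f', -, hf', -, rfl⟩
    exact finsum_nonneg hf'
  · exact P.finite_toSet.subset Set.support_indicator_subset
  · exact Set.indicator_nonneg fun x _ => hf x
  · exact (hcover e he).trans_eq (hfP e).symm
  · simpa using (hfP Set.univ).symm

theorem tauStar_le_card (hHP : ∀ e ∈ H, (e ∩ P).Nonempty) : tauStar H ≤ #P := by
  classical
  refine (tauStar_le_sum (P := P) (f := 1) (fun _ => zero_le_one) fun e he => ?_).trans_eq (by simp)
  obtain ⟨x, hxe, hxP⟩ := hHP e he
  have : 0 < #{x ∈ P | x ∈ e} := card_pos.2 ⟨x, mem_filter.2 ⟨hxP, hxe⟩⟩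
  simpa using Nat.one_le_iff_ne_zero.2 this.ne'

theorem exists_nonneg_comp_subtype_val_eq {β : Type*} {p : β → Prop} {f : Subtype p → ℝ}
    (hf : 0 ≤ f) : ∃ F : β → ℝ, 0 ≤ F ∧ F ∘ Subtype.val = f := by
  obtain ⟨F, rfl⟩ := Subtype.val_injective.surjective_comp_right f
  exact ⟨|F|, abs_nonneg F, funext fun x => abs_of_nonneg (hf x)⟩

open scoped Classical in
theorem exists_tauStar_le_sum_packing {H : Finset (Set α)}
    (hHP : ∀ e ∈ H, (e ∩ P).Nonempty) :
    ∃ g : Set α → ℝ, (∀ e, 0 ≤ g e) ∧ (∀ x ∈ P, ∑ e ∈ H with x ∈ e, g e ≤ 1) ∧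
      tauStar (H : Set (Set α)) ≤ ∑ e ∈ H, g e := by
  let A : Matrix H P ℝ := fun e x => if x.1 ∈ e.1 then 1 else 0
  obtain ⟨f₀, g₀, hf₀, hg₀, hcover, hload, hfg⟩ := exists_one_le_mulVec_vecMul_le_one A
    (fun e x => by positivity) fun ⟨e, he⟩ =>
      let ⟨x, hxe, hxP⟩ := hHP e he
      ⟨⟨x, hxP⟩, by simp [A, hxe]⟩
  obtain ⟨f, hf, rfl⟩ := exists_nonneg_comp_subtype_val_eq hf₀
  obtain ⟨g, hg, rfl⟩ := exists_nonneg_comp_subtype_val_eq hg₀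
  simp only [Function.comp_apply, sum_coe_sort _ f, sum_coe_sort _ g] at hfg
  refine ⟨g, hg, fun x hx => ?_, (tauStar_le_sum hf fun e he => ?_).trans_eq hfg⟩
  · have h := hload ⟨x, hx⟩
    rw [sum_filter, ← sum_coe_sort]
    simpa [Matrix.vecMul, dotProduct, A] using h
  · have h := hcover ⟨e, he⟩
    rw [sum_filter, ← sum_coe_sort]
    simpa [Matrix.mulVec, dotProduct, A] using h

end CoverMatching

section DIntervals

variable {α : Type*} [LinearOrder α] {e f : Set α} {L L' : Finset α}

/-- `L` contains a left endpoint for every component of `e`: each point of `e` is joined within `e`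
to a point of `L` on its left. -/
def ContainsLeftEndpoints (L : Finset α) (e : Set α) : Prop :=
  ∀ x ∈ e, ∃ l ∈ L, l ≤ x ∧ Set.Icc l x ⊆ e

theorem ContainsLeftEndpoints.exists_mem (hL : ContainsLeftEndpoints L e) (he : e.Nonempty) :
    ∃ x ∈ L, x ∈ e := by
  obtain ⟨y, hy⟩ := he
  obtain ⟨l, hl, hly, hsub⟩ := hL y hy
  exact ⟨l, hl, hsub ⟨le_rfl, hly⟩⟩

theorem ContainsLeftEndpoints.exists_mem_inter (he : ContainsLeftEndpoints L e)
    (hf : ContainsLeftEndpoints L' f) (hef : ¬ Disjoint e f) :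
    (∃ x ∈ L, x ∈ e ∩ f) ∨ ∃ x ∈ L', x ∈ e ∩ f := by
  obtain ⟨y, hye, hyf⟩ := Set.not_disjoint_iff.1 hef
  obtain ⟨l, hl, hly, hle⟩ := he y hye
  obtain ⟨l', hl', hl'y, hlf⟩ := hf y hyf
  obtain h | h := le_total l l'
  · exact .inr ⟨l', hl', hle ⟨h, hl'y⟩, hlf ⟨le_rfl, hl'y⟩⟩
  · exact .inl ⟨l, hl, hle ⟨le_rfl, hly⟩, hlf ⟨h, hly⟩⟩

end DIntervals

section DIntervalHypergraphs

variable {d : ℕ} {e : Set ℝ} {H : Set (Set ℝ)}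

theorem IsDInterval.isUnionOrdConnected (he : IsDInterval d e) : IsUnionOrdConnected d e := by
  obtain ⟨n, a, b, hn, -, -, rfl⟩ := he
  exact ⟨n, fun i => Set.Icc (a i) (b i), hn, fun i => Set.ordConnected_Icc, rfl⟩

theorem IsDInterval.exists_containsLeftEndpoints (he : IsDInterval d e) :
    ∃ L : Finset ℝ, #L ≤ d ∧ ContainsLeftEndpoints L e := by
  classical
  obtain ⟨n, a, b, hn, -, -, rfl⟩ := he
  refine ⟨univ.image a, card_image_le.trans (by simpa using hn), fun x hx => ?_⟩
  obtain ⟨i, hax, hxb⟩ := Set.mem_iUnion.1 hx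
  refine ⟨a i, mem_image_of_mem a (mem_univ i), hax, ?_⟩
  exact (Set.Icc_subset_Icc_right hxb).trans (Set.subset_iUnion_of_subset i le_rfl)

theorem exists_finset_forall_disjoint_of_disjoint_inter (hfin : H.Finite)
    (hH : ∀ e ∈ H, IsDInterval d e ∧ e.Nonempty) :
    ∃ P : Finset ℝ, (∀ e ∈ H, (e ∩ P).Nonempty) ∧
      ∀ e ∈ H, ∀ f ∈ H, Disjoint (e ∩ P) (f ∩ P) → Disjoint e f := by
  classical
  lift H to Finset (Set ℝ) using hfin
  choose! L _ hL using fun e he => (hH e he).1.exists_containsLeftEndpoints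
  have hLP : ∀ e ∈ H, ∀ x ∈ L e, x ∈ H.biUnion L := fun e he x hx => mem_biUnion.2 ⟨e, he, hx⟩
  refine ⟨H.biUnion L, fun e he => ?_, fun e he f hf => ?_⟩
  · obtain ⟨x, hx, hxe⟩ := (hL e he).exists_mem (hH e he).2
    exact ⟨x, hxe, hLP e he x hx⟩
  · contrapose!
    intro hef
    rw [Set.not_disjoint_iff]
    obtain ⟨x, hx, hxe, hxf⟩ | ⟨x, hx, hxe, hxf⟩ := (hL e he).exists_mem_inter (hL f hf) hef
    · exact ⟨x, ⟨hxe, hLP e he x hx⟩, hxf, hLP e he x hx⟩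
    · exact ⟨x, ⟨hxe, hLP f hf x hx⟩, hxf, hLP f hf x hx⟩

theorem tauStar_le_two_mul_mul_nu (hfin : H.Finite)
    (hH : ∀ e ∈ H, IsDInterval d e ∧ e.Nonempty) : tauStar H ≤ 2 * d * (nu H : ℝ) := by
  classical
  lift H to Finset (Set ℝ) using hfin with H
  choose! L hLd hL using fun e he => (hH e he).1.exists_containsLeftEndpoints
  have hLP : ∀ e ∈ H, ∀ x ∈ L e, x ∈ H.biUnion L := fun e he x hx => mem_biUnion.2 ⟨e, he, hx⟩
  obtain ⟨g, hg, hload, hτ⟩ := exists_tauStar_le_sum_packing (P := H.biUnion L) fun e he =>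
    let ⟨x, hx, hxe⟩ := (hL e he).exists_mem (hH e he).2
    ⟨x, hxe, hLP e he x hx⟩
  have hSH : ∀ e ∈ H.filter (0 < g ·), e ∈ H := fun e he => (mem_filter.1 he).1
  obtain ⟨M, hMS, hM, hgM⟩ := exists_pairwiseDisjoint_sum_le_two_mul (S := H.filter (0 < g ·))
    (L := L) (fun e he => (mem_filter.1 he).2) (fun e he => (hH e (hSH e he)).2)
    (fun e he => hLd e (hSH e he))
    (fun e he f hf hef => ((hL e (hSH e he)).exists_mem_inter (hL f (hSH f hf)) hef).imp
      (fun ⟨x, hx, _, hxf⟩ => ⟨x, hx, hxf⟩) fun ⟨x, hx, hxe, _⟩ => ⟨x, hx, hxe⟩)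
    fun e he x hx => (sum_le_sum_of_subset_of_nonneg
      (filter_subset_filter _ (filter_subset _ _)) fun f _ _ => hg f).trans
        (hload x (hLP e (hSH e he) x hx))
  have hMν := card_le_nu H.finite_toSet (coe_subset.2 (hMS.trans (filter_subset _ _))) hM
  calc tauStar (H : Set (Set ℝ)) ≤ ∑ e ∈ H, g e := hτ
    _ = ∑ e ∈ H with 0 < g e, g e :=
      (sum_filter_of_ne fun e _ hge => (hg e).lt_of_ne' hge).symm
    _ ≤ 2 * d * #M := hgM
    _ ≤ 2 * d * (nu (H : Set (Set ℝ)) : ℝ) := by gcongr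

/-- Tardos's theorem on `2`-intervals. -/
theorem exists_forall_inter_nonempty_card_le_three_mul_nu (hfin : H.Finite)
    (hH : ∀ e ∈ H, IsDInterval 2 e ∧ e.Nonempty) :
    ∃ C : Finset ℝ, (∀ e ∈ H, (e ∩ C).Nonempty) ∧ #C ≤ 3 * nu H := by
  classical
  by_contra! h
  obtain ⟨P, hHP, hP⟩ := exists_finset_forall_disjoint_of_disjoint_inter hfin hH
  have hnotPierced : ∀ C : Finset ℝ, #C ≤ 3 * nu H → ∃ e ∈ H, Disjoint (C : Set ℝ) e := by
    intro C hC
    by_contra! hpierced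
    refine (h C fun e he => ?_).not_ge hC
    exact Set.inter_comm (C : Set ℝ) e ▸ Set.not_disjoint_iff_nonempty_inter.1 (hpierced e he)
  obtain ⟨K, J, e, σ, w, hw, heσ, hdisj⟩ := exists_isPerfectFractionalMatching_of_not_pierced
    (fun e he => (hH e he).1.isUnionOrdConnected) hHP hnotPierced
  obtain ⟨M, hMJ, hM, hcard⟩ := hw.exists_pairwiseDisjoint_card_le fun k _ => (heσ k).2
  have hdisjM : ∀ k ∈ M, ∀ l ∈ M, k ≠ l → Disjoint (e k) (e l) := fun k hk l hl hkl =>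
    hP _ (heσ k).1 _ (heσ l).1 (hdisj k (hMJ hk) l (hMJ hl) (hM hk hl hkl))
  have hinj : Set.InjOn e M := fun k hk l hl hkl => by
    by_contra hne
    have hself := hdisjM k hk l hl hne
    rw [hkl, disjoint_self] at hself
    exact (hH _ (heσ l).1).2.ne_empty hself
  have hMν : #M ≤ nu H := by
    rw [← card_image_of_injOn hinj]
    refine card_le_nu hfin (by simpa [Set.subset_def] using fun k _ => (heσ k).1) ?_
    rw [coe_image]
    exact (hinj.pairwiseDisjoint_image (f := id)).2 fun k hk l hl => hdisjM k hk l hl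
  rw [Fintype.card_fin] at hcard
  omega

theorem tauStar_le_three_mul_nu (hfin : H.Finite)
    (hH : ∀ e ∈ H, IsDInterval 2 e ∧ e.Nonempty) : tauStar H ≤ 3 * (nu H : ℝ) := by
  obtain ⟨C, hHC, hC⟩ := exists_forall_inter_nonempty_card_le_three_mul_nu hfin hH
  exact (tauStar_le_card hHC).trans (by exact_mod_cast hC)

end DIntervalHypergraphs

/-- For a finite hypergraph of `d`-intervals with `d ≥ 2`,
`τ*(H) ≤ (4d − 6 + 3/d)·ν(H)`. -/
theorem tauStar_le_four_d_sub_six_add_three_div_d_mul_nu (d : ℕ) (hd : 2 ≤ d)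
    (H : Set (Set ℝ)) (hfin : H.Finite)
    (hH : ∀ e ∈ H, IsDInterval d e ∧ e.Nonempty) :
    tauStar H ≤ (4 * (d : ℝ) - 6 + 3 / d) * (nu H : ℝ) := by
  obtain rfl | hd' := hd.eq_or_lt
  · calc tauStar H ≤ 3 * (nu H : ℝ) := tauStar_le_three_mul_nu hfin hH
      _ ≤ (4 * ((2 : ℕ) : ℝ) - 6 + 3 / (2 : ℕ)) * (nu H : ℝ) := by gcongr; norm_num
  · have hd₃ : (3 : ℝ) ≤ d := by exact_mod_cast hd'
    have : 0 ≤ 3 / (d : ℝ) := by positivity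
    calc tauStar H ≤ 2 * d * (nu H : ℝ) := tauStar_le_two_mul_mul_nu hfin hH
      _ ≤ (4 * (d : ℝ) - 6 + 3 / d) * (nu H : ℝ) := by gcongr; linarith
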